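/- Assume (H1). For any λ ∈ (0,α), the entire solution u_∞(x,t;λ) = lim_{j→∞} u₀(x + ℓ(j,λ), t + jT) of (E) is either a positive T-periodic solution of the ODE ω' = f(t,ω) (i.e., independent of x and T-periodic in t) or a pulsating traveling front of (E). -/

import Mathlib

open Real Filter Topology Set

noncomputable section

/-- `u` is a classical solution of `u_t = u_xx + f(t,u)` on `ℝ × I`. -/
def IsSolOn (f : ℝ → ℝ → ℝ) (u : ℝ → ℝ → ℝ) (I : Set ℝ) : Prop :=
  ∃ ut ux uxx : ℝ → ℝ → ℝ,
    (∀ x : ℝ, ∀ t ∈ I, HasDerivAt (fun s => u x s) (ut x t) t) ∧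
    (∀ x : ℝ, ∀ t ∈ I, HasDerivAt (fun y => u y t) (ux x t) x) ∧
    (∀ x : ℝ, ∀ t ∈ I, HasDerivAt (fun y => ux y t) (uxx x t) x) ∧
    ContinuousOn (fun p : ℝ × ℝ => ut p.1 p.2) (Set.univ ×ˢ I) ∧
    ContinuousOn (fun p : ℝ × ℝ => ux p.1 p.2) (Set.univ ×ˢ I) ∧
    ContinuousOn (fun p : ℝ × ℝ => uxx p.1 p.2) (Set.univ ×ˢ I) ∧
    (∀ x : ℝ, ∀ t ∈ I, ut x t = uxx x t + f t (u x t))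

/-- `u₁` is steeper than `u₂` (Definition 2.5). -/
def Steeper (T : ℝ) (u₁ u₂ : ℝ → ℝ → ℝ) : Prop :=
  ∀ (t' x₁ : ℝ) (k : ℤ), u₁ x₁ t' = u₂ x₁ (t' + k * T) →
    (∀ x t : ℝ, u₁ x (t + t') = u₂ x (t + t' + k * T)) ∨
    deriv (fun y => u₁ y t') x₁ < deriv (fun y => u₂ y (t' + k * T)) x₁

/-- `ψ` is a `T`-periodic solution of the ODE `ω' = f(t,ω)`. -/
def IsPeriodicSol (f : ℝ → ℝ → ℝ) (T : ℝ) (ψ : ℝ → ℝ) : Prop :=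
  (∀ t : ℝ, HasDerivAt ψ (f t (ψ t)) t) ∧ ∀ t : ℝ, ψ (t + T) = ψ t

/-- `ψ` is isolated from below w.r.t. the ODE. -/
def IsolatedFromBelow (f : ℝ → ℝ → ℝ) (T : ℝ) (ψ : ℝ → ℝ) : Prop :=
  ¬ ∃ φ : ℕ → ℝ → ℝ, (∀ n, IsPeriodicSol f T (φ n)) ∧ (∀ n t, φ n t < ψ t) ∧
      TendstoUniformly φ ψ atTop

/-- `ψ` is stable from below w.r.t. the ODE. -/
def StableFromBelow (f : ℝ → ℝ → ℝ) (ψ : ℝ → ℝ) : Prop :=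
  ∀ ε > 0, ∃ δ > 0, ∀ g : ℝ → ℝ, (∀ t : ℝ, HasDerivAt g (f t (g t)) t) →
    g 0 ∈ Set.Icc (ψ 0 - δ) (ψ 0) → ∀ t ≥ 0, |g t - ψ t| ≤ ε

/-- Hypothesis (H1). -/
def HypH1 (f : ℝ → ℝ → ℝ) (α : ℝ) (ωα : ℝ → ℝ) : Prop :=
  ∃ u : ℝ → ℝ → ℝ,
    IsSolOn f u (Set.Ioi 0) ∧
    ContinuousOn (fun p : ℝ × ℝ => u p.1 p.2) (Set.univ ×ˢ Set.Ici 0) ∧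
    HasCompactSupport (fun x => u x 0) ∧
    (∀ x : ℝ, 0 ≤ u x 0 ∧ u x 0 < α) ∧
    (∀ K : Set ℝ, IsCompact K → ∀ ε > 0, ∃ t₀ : ℝ, ∀ t ≥ t₀, ∀ x ∈ K, |u x t - ωα t| < ε)

/-- Hypothesis (H2). -/
def HypH2 (f : ℝ → ℝ → ℝ) (T α : ℝ) : Prop :=
  ∀ ψ : ℝ → ℝ, IsPeriodicSol f T ψ → ψ 0 ∈ Set.Ioo 0 α →
    IsolatedFromBelow f T ψ → ¬ StableFromBelow f ψ →
    ∃ φ : ℕ → ℝ → ℝ,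
      (∀ n, ContDiff ℝ 1 (φ n)) ∧
      (∀ n t, φ n (t + T) = φ n t) ∧
      (∀ n t, f t (φ n t) ≤ deriv (φ n) t) ∧
      (∀ n t, φ n t < ψ t) ∧
      TendstoUniformly φ ψ atTop

/-- The solution `ũ(·,·;a)` of (E) with Heaviside-type initial datum `α·H(a−x)`,
bounded between `0` and `ω(α,·)`. -/
def IsHeavisideSol (f : ℝ → ℝ → ℝ) (α a : ℝ) (ωα : ℝ → ℝ) (u : ℝ → ℝ → ℝ) : Prop :=
  IsSolOn f u (Set.Ioi 0) ∧
  (∀ x : ℝ, ∀ t > 0, 0 ≤ u x t ∧ u x t ≤ ωα t) ∧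
  ∀ K : Set ℝ, IsCompact K → a ∉ K → ∀ ε > 0, ∃ δ > 0, ∀ t ∈ Set.Ioo (0:ℝ) δ, ∀ x ∈ K,
    |u x t - α * (if 0 ≤ a - x then 1 else 0)| < ε

/-- `U(x,t) → ψ(t)` as `x → +∞`, locally uniformly in `t`. -/
def LimitAtPlusInf (U : ℝ → ℝ → ℝ) (ψ : ℝ → ℝ) : Prop :=
  ∀ K : Set ℝ, IsCompact K → ∀ ε > 0, ∃ M : ℝ, ∀ x ≥ M, ∀ t ∈ K, |U x t - ψ t| < ε

/-- `U(x,t) → ψ(t)` as `x → −∞`, locally uniformly in `t`. -/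
def LimitAtMinusInf (U : ℝ → ℝ → ℝ) (ψ : ℝ → ℝ) : Prop :=
  ∀ K : Set ℝ, IsCompact K → ∀ ε > 0, ∃ M : ℝ, ∀ x ≤ M, ∀ t ∈ K, |U x t - ψ t| < ε

/-- `U` connects `ωa` (at `x = −∞`) to `ωb` (at `x = +∞`). -/
def Connects (U : ℝ → ℝ → ℝ) (ωa ωb : ℝ → ℝ) : Prop :=
  LimitAtMinusInf U ωa ∧ LimitAtPlusInf U ωb

/-- A pulsating traveling front of (E) with speed `c`, limit `ωa` at `−∞`, `ωb` at `+∞`. -/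
def IsPulsatingFront (f : ℝ → ℝ → ℝ) (T : ℝ) (ωa ωb : ℝ → ℝ) (U : ℝ → ℝ → ℝ) (c : ℝ) :
    Prop :=
  IsSolOn f U Set.univ ∧
  (∃ L : ℝ, c = L / T ∧ ∀ x t : ℝ, U x t = U (x - L) (t + T)) ∧
  Connects U ωa ωb

/-- A propagating terrace of (E) connecting `0` to `ωα`. -/
def IsTerrace (f : ℝ → ℝ → ℝ) (T : ℝ) (ωα : ℝ → ℝ) (N : ℕ)
    (ω : ℕ → ℝ → ℝ) (U : ℕ → ℝ → ℝ → ℝ) (c : ℕ → ℝ) : Prop :=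
  1 ≤ N ∧
  (∀ k ≤ N, IsPeriodicSol f T (ω k)) ∧
  (∀ t, ω 0 t = ωα t) ∧ (∀ t, ω N t = 0) ∧
  (∀ k, k < N → ∀ t, ω (k + 1) t < ω k t) ∧
  (∀ k, 1 ≤ k → k ≤ N → IsPulsatingFront f T (ω (k - 1)) (ω k) (U k) (c k)) ∧
  0 ≤ c 1 ∧ (∀ k, 1 ≤ k → k < N → c k ≤ c (k + 1))

/-- A minimal propagating terrace (Definition 1.4). -/
def IsMinimalTerrace (f : ℝ → ℝ → ℝ) (T : ℝ) (ωα : ℝ → ℝ) (N : ℕ)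
    (ω : ℕ → ℝ → ℝ) (U : ℕ → ℝ → ℝ → ℝ) (c : ℕ → ℝ) : Prop :=
  IsTerrace f T ωα N ω U c ∧
  (∀ (N' : ℕ) (ψ : ℕ → ℝ → ℝ) (V : ℕ → ℝ → ℝ → ℝ) (c' : ℕ → ℝ),
      IsTerrace f T ωα N' ψ V c' → ∀ k ≤ N, ∃ j ≤ N', ∀ t, ω k t = ψ j t) ∧
  (∀ k, 1 ≤ k → k ≤ N → ∀ V : ℝ → ℝ → ℝ, IsSolOn f V Set.univ →
      Connects V (ω (k - 1)) (ω k) → Steeper T (U k) V)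


/-- `V` is the locally uniform limit of the shifted solutions `u(· + ℓ j, · + jT)`. -/
def IsULimit (u : ℝ → ℝ → ℝ) (ℓ : ℕ → ℝ) (T : ℝ) (V : ℝ → ℝ → ℝ) : Prop :=
  ∀ K : Set (ℝ × ℝ), IsCompact K → ∀ ε > 0, ∃ J : ℕ, ∀ j ≥ J, ∀ p ∈ K,
    |u (p.1 + ℓ j) (p.2 + (j : ℝ) * T) - V p.1 p.2| < ε

/-!
Let `a = W - u₀(· - h)` and `b = u₀(· + h) - W`, where `W` solves (E) between `0` and `ω`. On
`{x < y}` the product `a⁺(x, t) b⁺(y, t)` is a subsolution of a linear heat equation in the plane;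
it vanishes on the diagonal because `u₀` is nonincreasing in `x`, and initially because `u₀` starts
from a step. By the maximum principle it is zero, so as `h → 0` the solution `u₀` crosses `W` at
most once, from above. This passes to the limit `V`, and applied to all translates of
`V(·, · ± T)` it shows that `V` is ordered with respect to each translate of `V(·, · + T)`.

By the strong maximum principle `V` is either independent of `x` or strictly decreasing.
Exponential super- and subsolutions bound the speed of the level `λ` of `u₀`, so `V(·, T)` lies
neither entirely above nor entirely below `λ = V(0, 0)`. In the first case this forces
`V(0, T) = V(0, 0)`, hence periodicity. In the second case the shifts putting `V(·, T)` below and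
above `V(·, 0)` form two nonempty closed sets covering the line, and a common shift makes the two
profiles equal. The limits at `±∞` solve the ODE: the integral of `V(x, ·)` over a time interval
converges as `x → ±∞`, so the limit of its second derivative in `x` must vanish.
-/

/-! ### Second derivatives at a maximum -/

/-- `g` is differentiable near `x` and `g''(x) = d`. Only derivatives near `x` are prescribed, so
that functions which are smooth on an open set, such as positive parts, are covered. -/
def HasSecondDerivAt (g : ℝ → ℝ) (d x : ℝ) : Prop :=
  ∃ g' : ℝ → ℝ, (∀ᶠ z in 𝓝 x, HasDerivAt g (g' z) z) ∧ HasDerivAt g' d x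

namespace HasSecondDerivAt

variable {g h : ℝ → ℝ} {d e x : ℝ}

lemma of_forall {g' : ℝ → ℝ} (hg : ∀ z, HasDerivAt g (g' z) z) (hg' : HasDerivAt g' d x) :
    HasSecondDerivAt g d x :=
  ⟨g', .of_forall hg, hg'⟩

lemma congr_of_eventuallyEq (hg : HasSecondDerivAt g d x) (hgh : h =ᶠ[𝓝 x] g) :
    HasSecondDerivAt h d x := by
  obtain ⟨g', hderiv, hderiv'⟩ := hg
  refine ⟨g', ?_, hderiv'⟩
  filter_upwards [hderiv, hgh.eventuallyEq_nhds] with z hz hz'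
  exact hz.congr_of_eventuallyEq hz'

lemma sub (hg : HasSecondDerivAt g d x) (hh : HasSecondDerivAt h e x) :
    HasSecondDerivAt (fun z => g z - h z) (d - e) x := by
  obtain ⟨g', hg, hg'⟩ := hg
  obtain ⟨h', hh, hh'⟩ := hh
  refine ⟨fun z => g' z - h' z, ?_, hg'.sub hh'⟩
  filter_upwards [hg, hh] with z hgz hhz using hgz.sub hhz

lemma add (hg : HasSecondDerivAt g d x) (hh : HasSecondDerivAt h e x) :
    HasSecondDerivAt (fun z => g z + h z) (d + e) x := by
  obtain ⟨g', hg, hg'⟩ := hg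
  obtain ⟨h', hh, hh'⟩ := hh
  refine ⟨fun z => g' z + h' z, ?_, hg'.add hh'⟩
  filter_upwards [hg, hh] with z hgz hhz using hgz.add hhz

lemma const_mul (c : ℝ) (hg : HasSecondDerivAt g d x) :
    HasSecondDerivAt (fun z => c * g z) (c * d) x := by
  obtain ⟨g', hg, hg'⟩ := hg
  refine ⟨fun z => c * g' z, ?_, hg'.const_mul c⟩
  filter_upwards [hg] with z hz using hz.const_mul c

lemma nonpos_of_isLocalMax (hg : HasSecondDerivAt g d x) (hmax : IsLocalMax g x) : d ≤ 0 := by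
  obtain ⟨g', hderiv, hderiv'⟩ := hg
  have hdd : deriv (deriv g) x = d := by
    have : deriv g =ᶠ[𝓝 x] g' := hderiv.mono fun z hz => hz.deriv
    rw [this.deriv_eq, hderiv'.deriv]
  by_contra! hd
  have hmin : IsLocalMin g x := isLocalMin_of_deriv_deriv_pos (by rwa [hdd]) hmax.deriv_eq_zero
    hderiv.self_of_nhds.continuousAt
  have hconst : g =ᶠ[𝓝 x] fun _ => g x := by
    filter_upwards [hmax, hmin] with z hz hz' using le_antisymm hz hz'
  have hzero : deriv (deriv g) x = 0 := by simp [hconst.deriv.deriv_eq]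
  exact hd.ne' (hdd.symm.trans hzero)

end HasSecondDerivAt

lemma nonneg_of_hasDerivAt_of_eventually_le {g : ℝ → ℝ} {d t : ℝ} (hg : HasDerivAt g d t)
    (hmax : ∀ᶠ r in 𝓝[<] t, g r ≤ g t) : 0 ≤ d := by
  have hslope : Tendsto (slope g t) (𝓝[<] t) (𝓝 d) :=
    (hasDerivAt_iff_tendsto_slope.1 hg).mono_left (nhdsWithin_mono t fun _ hr => ne_of_lt hr)
  refine ge_of_tendsto hslope ?_
  filter_upwards [hmax, self_mem_nhdsWithin] with r hr hrt
  rw [slope_def_field]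
  exact div_nonneg_of_nonpos (sub_nonpos.2 hr) (sub_nonpos.2 (le_of_lt hrt))

/-! ### The maximum principle -/

/-- `p` satisfies `p_t ≤ p_xx + K p` at `(x, t)`. -/
def IsSubsolAt (K : ℝ) (p : ℝ → ℝ → ℝ) (x t : ℝ) : Prop :=
  ∃ pt pxx, HasDerivAt (fun s => p x s) pt t ∧ HasSecondDerivAt (fun z => p z t) pxx x ∧
    pt ≤ pxx + K * p x t

/-- `p` satisfies `p_t ≤ p_xx + p_yy + K p` at `(x, y, t)`; the second space variable serves to
compare two solutions at two points simultaneously. -/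
def IsPlaneSubsolAt (K : ℝ) (p : ℝ → ℝ → ℝ → ℝ) (x y t : ℝ) : Prop :=
  ∃ pt pxx pyy, HasDerivAt (fun s => p x y s) pt t ∧ HasSecondDerivAt (fun z => p z y t) pxx x ∧
    HasSecondDerivAt (fun z => p x z t) pyy y ∧ pt ≤ pxx + pyy + K * p x y t

/-- The penalization of a subsolution that turns it into a strict subsolution of the heat
equation, negative far away; the coefficient `5` exceeds the Laplacian of `x ^ 2 + y ^ 2`. -/
def penalized (K ε : ℝ) (p : ℝ → ℝ → ℝ → ℝ) (x y t : ℝ) : ℝ :=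
  exp (-K * t) * p x y t - ε * (1 + x ^ 2 + y ^ 2 + 5 * t)

section MaximumPrinciple

variable {K M ε : ℝ} {p : ℝ → ℝ → ℝ → ℝ} {x y t : ℝ}

lemma hasSecondDerivAt_penalty (ε a b x : ℝ) :
    HasSecondDerivAt (fun z => ε * (a + z ^ 2 + b)) (ε * 2) x := by
  refine .const_mul ε (.of_forall (g' := fun z => 2 * z) (fun z => ?_) ?_)
  · simpa using ((hasDerivAt_pow 2 z).const_add a).add_const b
  · simpa using (hasDerivAt_id x).const_mul 2

lemma IsPlaneSubsolAt.not_isLocalMax_penalized (hε : 0 < ε) (hp : IsPlaneSubsolAt K p x y t)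
    (hx : IsLocalMax (fun z => penalized K ε p z y t) x)
    (hy : IsLocalMax (fun z => penalized K ε p x z t) y) :
    ¬ ∀ᶠ s in 𝓝[<] t, penalized K ε p x y s ≤ penalized K ε p x y t := by
  intro ht
  obtain ⟨pt, pxx, pyy, hpt, hpxx, hpyy, hle⟩ := hp
  have hexp : HasDerivAt (fun s => exp (-K * s)) (exp (-K * t) * -K) t := by
    simpa using ((hasDerivAt_id t).const_mul (-K)).exp
  have hpen : HasDerivAt (fun s => ε * (1 + x ^ 2 + y ^ 2 + 5 * s)) (ε * 5) t := by
    simpa using (((hasDerivAt_id t).const_mul 5).const_add (1 + x ^ 2 + y ^ 2)).const_mul ε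
  have ht' := nonneg_of_hasDerivAt_of_eventually_le ((hexp.mul hpt).sub hpen) ht
  have hx' := ((hpxx.const_mul (exp (-K * t))).sub
    (hasSecondDerivAt_penalty ε 1 (y ^ 2 + 5 * t) x)).nonpos_of_isLocalMax (by
      simpa only [penalized, add_assoc] using hx)
  have hy' := ((hpyy.const_mul (exp (-K * t))).sub
    (hasSecondDerivAt_penalty ε (1 + x ^ 2) (5 * t) y)).nonpos_of_isLocalMax (by
      simpa only [penalized] using hy)
  have := mul_le_mul_of_nonneg_left hle (exp_pos (-K * t)).le
  linarith

lemma penalized_nonpos_of_le {C : ℝ} (hK : 0 ≤ K) (ht : 0 ≤ t) (hC : 0 ≤ C)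
    (hp : p x y t ≤ C) (hCε : C ≤ ε * (1 + x ^ 2 + y ^ 2 + 5 * t)) :
    penalized K ε p x y t ≤ 0 := by
  have hexp : exp (-K * t) ≤ 1 := exp_le_one_iff.2 (by nlinarith)
  have : exp (-K * t) * p x y t ≤ 1 * C :=
    (mul_le_mul_of_nonneg_left hp (exp_pos _).le).trans (mul_le_mul_of_nonneg_right hexp hC)
  rw [penalized]
  linarith

lemma continuousOn_penalized
    (hcont : ContinuousOn (fun q : ℝ × ℝ × ℝ => p q.1 q.2.1 q.2.2) {q | 0 < q.2.2}) :
    ContinuousOn (fun q : ℝ × ℝ × ℝ => penalized K ε p q.1 q.2.1 q.2.2) {q | 0 < q.2.2} := by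
  unfold penalized
  fun_prop

lemma exists_pos_isLocalMax {Q : ℝ → ℝ → ℝ → ℝ} {R s : ℝ} (hR : 0 ≤ R) (hs : 0 < s)
    (hcont : ContinuousOn (fun q : ℝ × ℝ × ℝ => Q q.1 q.2.1 q.2.2) {q | 0 < q.2.2})
    (hfar : ∀ x y t, 0 < t → R ^ 2 ≤ x ^ 2 + y ^ 2 → Q x y t ≤ 0)
    (hearly : ∀ t ∈ Ioc 0 s, ∀ x ∈ Icc (-R) R, ∀ y ∈ Icc (-R) R, Q x y t ≤ 0)
    {x₀ y₀ t₀ : ℝ} (ht₀ : 0 < t₀) (hpos : 0 < Q x₀ y₀ t₀) :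
    ∃ x y t, 0 < t ∧ 0 < Q x y t ∧ IsLocalMax (fun z => Q z y t) x ∧
      IsLocalMax (fun z => Q x z t) y ∧ ∀ᶠ r in 𝓝[<] t, Q x y r ≤ Q x y t := by
  have hinterior {x y t : ℝ} (ht : 0 < t) (hQ : 0 < Q x y t) :
      x ∈ Ioo (-R) R ∧ y ∈ Ioo (-R) R ∧ s < t := by
    have hlt : x ^ 2 + y ^ 2 < R ^ 2 := not_le.1 fun h => hQ.not_ge (hfar x y t ht h)
    have hx : x ∈ Ioo (-R) R := abs_lt.1 (abs_lt_of_sq_lt_sq (by nlinarith) hR)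
    have hy : y ∈ Ioo (-R) R := abs_lt.1 (abs_lt_of_sq_lt_sq (by nlinarith) hR)
    exact ⟨hx, hy, not_le.1 fun h => hQ.not_ge
      (hearly t ⟨ht, h⟩ x (Ioo_subset_Icc_self hx) y (Ioo_subset_Icc_self hy))⟩
  obtain ⟨hx₀, hy₀, hst₀⟩ := hinterior ht₀ hpos
  have hmem₀ : (x₀, y₀, t₀) ∈ Icc (-R) R ×ˢ Icc (-R) R ×ˢ Icc s t₀ :=
    ⟨Ioo_subset_Icc_self hx₀, Ioo_subset_Icc_self hy₀, hst₀.le, le_rfl⟩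
  obtain ⟨⟨x, y, t⟩, ⟨hx, hy, hst, htt₀⟩, hmax⟩ :=
    (isCompact_Icc.prod (isCompact_Icc.prod isCompact_Icc)).exists_isMaxOn ⟨_, hmem₀⟩
      (hcont.mono fun q hq => hs.trans_le hq.2.2.1)
  have ht : 0 < t := hs.trans_le hst
  have hposmax : 0 < Q x y t := hpos.trans_le (hmax hmem₀)
  obtain ⟨hx', hy', hst'⟩ := hinterior ht hposmax
  refine ⟨x, y, t, ht, hposmax, ?_, ?_, ?_⟩
  · filter_upwards [Icc_mem_nhds hx'.1 hx'.2] with z hz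
    exact hmax (a := (z, y, t)) ⟨hz, hy, hst, htt₀⟩
  · filter_upwards [Icc_mem_nhds hy'.1 hy'.2] with z hz
    exact hmax (a := (x, z, t)) ⟨hx, hz, hst, htt₀⟩
  · filter_upwards [Ioo_mem_nhdsLT hst'] with r hr
    exact hmax (a := (x, y, r)) ⟨hx, hy, hr.1.le, hr.2.le.trans htt₀⟩

lemma penalized_nonpos (hK : 0 ≤ K) (hε : 0 < ε)
    (hcont : ContinuousOn (fun q : ℝ × ℝ × ℝ => p q.1 q.2.1 q.2.2) {q | 0 < q.2.2})
    (hbdd : ∀ x y t, 0 < t → p x y t ≤ M)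
    (hsub : ∀ x y t, 0 < t → 0 < p x y t → IsPlaneSubsolAt K p x y t)
    (hinit : ∀ R, ∀ η > 0, ∀ᶠ t in 𝓝[>] 0, ∀ x ∈ Icc (-R) R, ∀ y ∈ Icc (-R) R, p x y t ≤ η)
    (x₀ y₀ : ℝ) {t₀ : ℝ} (ht₀ : 0 < t₀) : penalized K ε p x₀ y₀ t₀ ≤ 0 := by
  by_contra! hpos
  obtain ⟨R, hR, hRM⟩ : ∃ R, 0 ≤ R ∧ max M 0 ≤ ε * R ^ 2 :=
    ((eventually_ge_atTop 0).and
      (((tendsto_pow_atTop two_ne_zero).const_mul_atTop hε).eventually_ge_atTop _)).exists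
  have hfar (x y t : ℝ) (ht : 0 < t) (hxy : R ^ 2 ≤ x ^ 2 + y ^ 2) : penalized K ε p x y t ≤ 0 :=
    penalized_nonpos_of_le hK ht.le (le_max_right M 0) ((hbdd x y t ht).trans (le_max_left _ _))
      (by nlinarith)
  obtain ⟨s, hs, hinit'⟩ := mem_nhdsGT_iff_exists_Ioc_subset.1 (hinit R ε hε)
  have hearly (t : ℝ) (ht : t ∈ Ioc 0 s) (x : ℝ) (hx : x ∈ Icc (-R) R) (y : ℝ)
      (hy : y ∈ Icc (-R) R) : penalized K ε p x y t ≤ 0 :=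
    penalized_nonpos_of_le hK ht.1.le hε.le (hinit' ht x hx y hy) (by
      nlinarith [ht.1, sq_nonneg x, sq_nonneg y])
  obtain ⟨x, y, t, ht, hposmax, hxmax, hymax, htmax⟩ :=
    exists_pos_isLocalMax hR hs (continuousOn_penalized hcont) hfar hearly ht₀ hpos
  have hp : 0 < p x y t := lt_of_not_ge fun h =>
    hposmax.not_ge (penalized_nonpos_of_le hK ht.le le_rfl h (by positivity))
  exact (hsub x y t ht hp).not_isLocalMax_penalized hε hxmax hymax htmax

theorem nonpos_of_isPlaneSubsolAt (hK : 0 ≤ K)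
    (hcont : ContinuousOn (fun q : ℝ × ℝ × ℝ => p q.1 q.2.1 q.2.2) {q | 0 < q.2.2})
    (hbdd : ∀ x y t, 0 < t → p x y t ≤ M)
    (hsub : ∀ x y t, 0 < t → 0 < p x y t → IsPlaneSubsolAt K p x y t)
    (hinit : ∀ R, ∀ η > 0, ∀ᶠ t in 𝓝[>] 0, ∀ x ∈ Icc (-R) R, ∀ y ∈ Icc (-R) R, p x y t ≤ η)
    (x y : ℝ) {t : ℝ} (ht : 0 < t) : p x y t ≤ 0 := by
  have hlim : Tendsto (fun ε => penalized K ε p x y t) (𝓝[>] 0) (𝓝 (exp (-K * t) * p x y t)) := by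
    have : Continuous fun ε => penalized K ε p x y t := by unfold penalized; fun_prop
    simpa [penalized] using (this.tendsto 0).mono_left nhdsWithin_le_nhds
  have : exp (-K * t) * p x y t ≤ 0 := le_of_tendsto hlim <| by
    filter_upwards [self_mem_nhdsWithin] with ε hε
    exact penalized_nonpos hK hε hcont hbdd hsub hinit x y ht
  exact nonpos_of_mul_nonpos_right this (exp_pos _)

theorem nonpos_of_isSubsolAt {p : ℝ → ℝ → ℝ} (hK : 0 ≤ K)
    (hcont : ContinuousOn (fun q : ℝ × ℝ => p q.1 q.2) (univ ×ˢ Ioi 0))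
    (hbdd : ∀ x t, 0 < t → p x t ≤ M)
    (hsub : ∀ x t, 0 < t → 0 < p x t → IsSubsolAt K p x t)
    (hinit : ∀ R, ∀ η > 0, ∀ᶠ t in 𝓝[>] 0, ∀ x ∈ Icc (-R) R, p x t ≤ η)
    (x : ℝ) {t : ℝ} (ht : 0 < t) : p x t ≤ 0 := by
  refine nonpos_of_isPlaneSubsolAt (p := fun x _ t => p x t) hK ?_ (fun x _ => hbdd x) ?_ ?_ x 0 ht
  · exact hcont.comp (f := fun q : ℝ × ℝ × ℝ => (q.1, q.2.2)) (by fun_prop)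
      fun q hq => ⟨mem_univ _, hq⟩
  · intro x y t ht hpos
    obtain ⟨pt, pxx, hpt, hpxx, hle⟩ := hsub x t ht hpos
    exact ⟨pt, pxx, 0, hpt, hpxx, .of_forall (fun z => hasDerivAt_const z _) (hasDerivAt_const y 0),
      by simpa using hle⟩
  · exact fun R η hη => (hinit R η hη).mono fun t h x hx _ _ => h x hx

end MaximumPrinciple

/-! ### Algebra of subsolutions -/

namespace IsSubsolAt

variable {K K' : ℝ} {p q : ℝ → ℝ → ℝ} {x y t : ℝ}

lemma add (hp : IsSubsolAt K p x t) (hq : IsSubsolAt K q x t) :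
    IsSubsolAt K (fun x t => p x t + q x t) x t := by
  obtain ⟨pt, pxx, hpt, hpxx, hple⟩ := hp
  obtain ⟨qt, qxx, hqt, hqxx, hqle⟩ := hq
  exact ⟨_, _, hpt.add hqt, hpxx.add hqxx, by linarith⟩

lemma const_mul {c : ℝ} (hc : 0 ≤ c) (hp : IsSubsolAt K p x t) :
    IsSubsolAt K (fun x t => c * p x t) x t := by
  obtain ⟨pt, pxx, hpt, hpxx, hple⟩ := hp
  exact ⟨_, _, hpt.const_mul c, hpxx.const_mul c,
    (mul_le_mul_of_nonneg_left hple hc).trans_eq (by ring)⟩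

lemma mono (hp : IsSubsolAt K p x t) (hKK' : K ≤ K') (hpos : 0 ≤ p x t) :
    IsSubsolAt K' p x t := by
  obtain ⟨pt, pxx, hpt, hpxx, hple⟩ := hp
  exact ⟨pt, pxx, hpt, hpxx, hple.trans (by gcongr)⟩

lemma mul (hp : IsSubsolAt K p x t) (hq : IsSubsolAt K q y t) (hp₀ : 0 ≤ p x t)
    (hq₀ : 0 ≤ q y t) : IsPlaneSubsolAt (2 * K) (fun x y t => p x t * q y t) x y t := by
  obtain ⟨pt, pxx, hpt, hpxx, hple⟩ := hp
  obtain ⟨qt, qyy, hqt, hqyy, hqle⟩ := hq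
  refine ⟨_, q y t * pxx, _, hpt.mul hqt, ?_, hqyy.const_mul (p x t), ?_⟩
  · simpa only [mul_comm] using hpxx.const_mul (q y t)
  · nlinarith

end IsSubsolAt

lemma IsPlaneSubsolAt.congr_of_eventuallyEq {K : ℝ} {p q : ℝ → ℝ → ℝ → ℝ} {x y t : ℝ}
    (hp : IsPlaneSubsolAt K p x y t)
    (hqp : ∀ᶠ z : ℝ × ℝ × ℝ in 𝓝 (x, y, t), q z.1 z.2.1 z.2.2 = p z.1 z.2.1 z.2.2) :
    IsPlaneSubsolAt K q x y t := by
  obtain ⟨pt, pxx, pyy, hpt, hpxx, hpyy, hple⟩ := hp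
  have hx : Tendsto (fun z => (z, y, t)) (𝓝 x) (𝓝 (x, y, t)) :=
    Continuous.tendsto (f := fun z => (z, y, t)) (by fun_prop) x
  have hy : Tendsto (fun z => (x, z, t)) (𝓝 y) (𝓝 (x, y, t)) :=
    Continuous.tendsto (f := fun z => (x, z, t)) (by fun_prop) y
  have ht : Tendsto (fun z => (x, y, z)) (𝓝 t) (𝓝 (x, y, t)) :=
    Continuous.tendsto (f := fun z => (x, y, z)) (by fun_prop) t
  refine ⟨pt, pxx, pyy, hpt.congr_of_eventuallyEq (ht.eventually hqp),
    hpxx.congr_of_eventuallyEq (hx.eventually hqp),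
    hpyy.congr_of_eventuallyEq (hy.eventually hqp), ?_⟩
  rwa [hqp.self_of_nhds]

/-! ### Classical solutions -/

section Solutions

variable {f g u v : ℝ → ℝ → ℝ} {I J : Set ℝ} {K : NNReal} {m M T : ℝ}

lemma exists_forall_lipschitzOnWith_of_periodic (hT : 0 < T)
    (hf : ContDiff ℝ 1 (Function.uncurry f)) (hfper : ∀ t u, f (t + T) u = f t u) (m M : ℝ) :
    ∃ K : NNReal, ∀ t, LipschitzOnWith K (f t) (Icc m M) := by
  obtain ⟨K, hK⟩ := hf.contDiffOn.exists_lipschitzOnWith one_ne_zero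
    ((convex_Icc 0 T).prod (convex_Icc m M)) (isCompact_Icc.prod isCompact_Icc)
  refine ⟨K, fun t => .of_dist_le_mul fun u hu v hv => ?_⟩
  have hper : Function.Periodic f T := fun t => funext (hfper t)
  obtain ⟨s, hs, hfs⟩ := hper.exists_mem_Ico₀ hT t
  simpa [Prod.dist_eq, hfs] using
    hK.dist_le_mul (s, u) ⟨Ico_subset_Icc_self hs, hu⟩ (s, v) ⟨Ico_subset_Icc_self hs, hv⟩

lemma sub_le_mul_sub_of_lipschitzOnWith {g : ℝ → ℝ} (hg : LipschitzOnWith K g J) {a b : ℝ}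
    (ha : a ∈ J) (hb : b ∈ J) (hba : b ≤ a) : g a - g b ≤ K * (a - b) := by
  have := hg.dist_le_mul a ha b hb
  rw [Real.dist_eq, Real.dist_eq, abs_of_nonneg (sub_nonneg.2 hba)] at this
  exact (le_abs_self _).trans this

namespace IsSolOn

lemma continuousOn (hI : IsOpen I) (hu : IsSolOn f u I) :
    ContinuousOn (fun p : ℝ × ℝ => u p.1 p.2) (univ ×ˢ I) := by
  obtain ⟨ut, ux, uxx, hut, hux, -, hutc, huxc, -⟩ := hu
  have hopen : IsOpen (univ ×ˢ I : Set (ℝ × ℝ)) := isOpen_univ.prod hI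
  intro p hp
  have hnhds := hopen.mem_nhds hp
  refine (hasStrictFDerivAt_uncurry_coprod (𝕜 := ℝ) (f := u)
    (f₁ := fun x t => .toSpanSingleton ℝ (ux x t)) (f₂ := fun x t => .toSpanSingleton ℝ (ut x t))
    ?_ ?_ ?_ ?_).continuousAt.continuousWithinAt
  · filter_upwards [hnhds] with q hq using hux q.1 q.2 hq.2
  · filter_upwards [hnhds] with q hq using hut q.1 q.2 hq.2
  · exact (ContinuousLinearMap.toSpanSingletonCLE (𝕜 := ℝ) (E := ℝ)).continuous.continuousAt.comp
      (huxc.continuousAt hnhds)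
  · exact (ContinuousLinearMap.toSpanSingletonCLE (𝕜 := ℝ) (E := ℝ)).continuous.continuousAt.comp
      (hutc.continuousAt hnhds)

lemma continuous (hu : IsSolOn f u univ) : Continuous fun p : ℝ × ℝ => u p.1 p.2 := by
  simpa using hu.continuousOn isOpen_univ

lemma mono (hu : IsSolOn f u I) (hJ : J ⊆ I) : IsSolOn f u J := by
  obtain ⟨ut, ux, uxx, hut, hux, huxx, hutc, huxc, huxxc, heq⟩ := hu
  have hsub : (univ ×ˢ J : Set (ℝ × ℝ)) ⊆ univ ×ˢ I := prod_mono_right hJ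
  exact ⟨ut, ux, uxx, fun x t ht => hut x t (hJ ht), fun x t ht => hux x t (hJ ht),
    fun x t ht => huxx x t (hJ ht), hutc.mono hsub, huxc.mono hsub, huxxc.mono hsub,
    fun x t ht => heq x t (hJ ht)⟩

lemma translate (hu : IsSolOn f u I) (a s : ℝ) (hJ : ∀ t ∈ J, t + s ∈ I)
    (hg : ∀ t v, g t v = f (t + s) v) : IsSolOn g (fun x t => u (x + a) (t + s)) J := by
  obtain ⟨ut, ux, uxx, hut, hux, huxx, hutc, huxc, huxxc, heq⟩ := hu
  have hmaps : MapsTo (fun p : ℝ × ℝ => (p.1 + a, p.2 + s)) (univ ×ˢ J) (univ ×ˢ I) :=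
    fun p hp => ⟨mem_univ _, hJ _ hp.2⟩
  have hcont : ContinuousOn (fun p : ℝ × ℝ => (p.1 + a, p.2 + s)) (univ ×ˢ J) := by fun_prop
  refine ⟨fun x t => ut (x + a) (t + s), fun x t => ux (x + a) (t + s),
    fun x t => uxx (x + a) (t + s), fun x t ht => (hut _ _ (hJ t ht)).comp_add_const t s,
    fun x t ht => (hux _ _ (hJ t ht)).comp_add_const x a,
    fun x t ht => (huxx _ _ (hJ t ht)).comp_add_const x a,
    hutc.comp hcont hmaps, huxc.comp hcont hmaps, huxxc.comp hcont hmaps, fun x t ht => ?_⟩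
  rw [hg]
  exact heq _ _ (hJ t ht)

lemma translate_space (hu : IsSolOn f u I) (a : ℝ) : IsSolOn f (fun x t => u (x + a) t) I := by
  simpa using hu.translate a 0 (g := f) (J := I) (by simp) (by simp)

lemma reflect (hu : IsSolOn f u I) : IsSolOn f (fun x t => u (-x) t) I := by
  obtain ⟨ut, ux, uxx, hut, hux, huxx, hutc, huxc, huxxc, heq⟩ := hu
  have hmaps : MapsTo (fun p : ℝ × ℝ => (-p.1, p.2)) (univ ×ˢ I) (univ ×ˢ I) :=
    fun p hp => ⟨mem_univ _, hp.2⟩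
  have hcont : ContinuousOn (fun p : ℝ × ℝ => (-p.1, p.2)) (univ ×ˢ I) := by fun_prop
  refine ⟨fun x t => ut (-x) t, fun x t => -ux (-x) t, fun x t => uxx (-x) t,
    fun x t ht => hut _ _ ht, fun x t ht => ?_, fun x t ht => ?_, hutc.comp hcont hmaps,
    (huxc.comp hcont hmaps).neg, huxxc.comp hcont hmaps, fun x t ht => heq _ _ ht⟩
  · exact ((hux (-x) t ht).comp x (hasDerivAt_neg x)).congr_deriv (by simp)
  · exact ((huxx (-x) t ht).comp x (hasDerivAt_neg x)).neg.congr_deriv (by simp)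

lemma of_ode (hf : Continuous (Function.uncurry f)) {ω : ℝ → ℝ}
    (hω : ∀ t, HasDerivAt ω (f t (ω t)) t) (I : Set ℝ) : IsSolOn f (fun _ t => ω t) I := by
  have hωc : Continuous ω := continuous_iff_continuousAt.2 fun t => (hω t).continuousAt
  have hc : Continuous fun t => f t (ω t) := hf.comp (continuous_id.prodMk hωc)
  exact ⟨fun _ t => f t (ω t), fun _ _ => 0, fun _ _ => 0, fun _ t _ => hω t,
    fun x t _ => hasDerivAt_const x _, fun x t _ => hasDerivAt_const x _,
    (hc.comp continuous_snd).continuousOn, continuousOn_const, continuousOn_const,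
    fun x t _ => by simp⟩

lemma exists_hasDerivAt_sub (hu : IsSolOn f u I) (hv : IsSolOn f v I) (x : ℝ) {t : ℝ}
    (ht : t ∈ I) : ∃ wt wxx, HasDerivAt (fun s => u x s - v x s) wt t ∧
      HasSecondDerivAt (fun z => u z t - v z t) wxx x ∧
      wt = wxx + (f t (u x t) - f t (v x t)) := by
  obtain ⟨ut, ux, uxx, hut, hux, huxx, -, -, -, heq⟩ := hu
  obtain ⟨vt, vx, vxx, hvt, hvx, hvxx, -, -, -, heq'⟩ := hv
  refine ⟨_, _, (hut x t ht).sub (hvt x t ht),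
    .sub (.of_forall (fun z => hux z t ht) (huxx x t ht))
      (.of_forall (fun z => hvx z t ht) (hvxx x t ht)), ?_⟩
  rw [heq x t ht, heq' x t ht]
  ring

lemma isSubsolAt_sub_of_le (hu : IsSolOn f u I) (hv : IsSolOn f v I) {x t : ℝ} (ht : t ∈ I)
    (hL : LipschitzOnWith K (f t) (Icc m M)) (hum : u x t ∈ Icc m M) (hvm : v x t ∈ Icc m M)
    (hvu : v x t ≤ u x t) : IsSubsolAt K (fun x t => u x t - v x t) x t := by
  obtain ⟨wt, wxx, hwt, hwxx, heq⟩ := hu.exists_hasDerivAt_sub hv x ht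
  exact ⟨wt, wxx, hwt, hwxx, by linarith [sub_le_mul_sub_of_lipschitzOnWith hL hum hvm hvu]⟩

lemma isSubsolAt_sub_of_ge (hu : IsSolOn f u I) (hv : IsSolOn f v I) {x t : ℝ} (ht : t ∈ I)
    (hL : LipschitzOnWith K (f t) (Icc m M)) (hum : u x t ∈ Icc m M) (hvm : v x t ∈ Icc m M)
    (huv : u x t ≤ v x t) : IsSubsolAt (-K) (fun x t => u x t - v x t) x t := by
  obtain ⟨wt, wxx, hwt, hwxx, heq⟩ := hu.exists_hasDerivAt_sub hv x ht
  have := hL.dist_le_mul _ hum _ hvm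
  rw [Real.dist_eq, Real.dist_eq, abs_of_nonpos (sub_nonpos.2 huv)] at this
  exact ⟨wt, wxx, hwt, hwxx, by linarith [le_abs_self (f t (u x t) - f t (v x t))]⟩

end IsSolOn

/-! ### Comparison -/

lemma isSubsolAt_neg_exp (K x t : ℝ) : IsSubsolAt K (fun x t => -exp (x + (1 + K) * t)) x t := by
  have hspace (z : ℝ) :
      HasDerivAt (fun z => -exp (z + (1 + K) * t)) (-exp (z + (1 + K) * t)) z := by
    simpa using ((hasDerivAt_id z).add_const ((1 + K) * t)).exp.fun_neg
  have htime : HasDerivAt (fun s => -exp (x + (1 + K) * s))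
      (-(exp (x + (1 + K) * t) * (1 + K))) t := by
    simpa using (((hasDerivAt_id t).const_mul (1 + K)).const_add x).exp.fun_neg
  exact ⟨_, _, htime, .of_forall hspace (hspace x), by linarith⟩

theorem IsSolOn.sub_le_exp {A : ℝ} (hA : 0 ≤ A) (hL : ∀ t, LipschitzOnWith K (f t) (Icc m M))
    (hu : IsSolOn f u (Ioi 0)) (hv : IsSolOn f v (Ioi 0))
    (hum : ∀ x t, 0 < t → u x t ∈ Icc m M) (hvm : ∀ x t, 0 < t → v x t ∈ Icc m M)
    (hinit : ∀ R, ∀ η > 0, ∀ᶠ t in 𝓝[>] 0, ∀ x ∈ Icc (-R) R, u x t - v x t ≤ A * exp x + η)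
    (x : ℝ) {t : ℝ} (ht : 0 < t) : u x t - v x t ≤ A * exp (x + (1 + K) * t) := by
  have hE (x t : ℝ) : 0 ≤ A * exp (x + (1 + K) * t) := by positivity
  suffices u x t - v x t + A * -exp (x + (1 + K) * t) ≤ 0 by linarith
  refine nonpos_of_isSubsolAt (p := fun x t => u x t - v x t + A * -exp (x + (1 + K) * t))
    (M := M - m) K.2 ?_ (fun x t ht => ?_) (fun x t ht hpos => ?_) (fun R η hη => ?_) x ht
  · exact ((hu.continuousOn isOpen_Ioi).sub (hv.continuousOn isOpen_Ioi)).add (by fun_prop)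
  · linarith [hE x t, (hum x t ht).2, (hvm x t ht).1]
  · exact (hu.isSubsolAt_sub_of_le hv ht (hL t) (hum x t ht) (hvm x t ht) (by
      linarith [hE x t])).add ((isSubsolAt_neg_exp K x t).const_mul hA)
  · filter_upwards [hinit R η hη, self_mem_nhdsWithin] with t hηt ht x hx
    have ht : 0 < t := ht
    have : A * exp x ≤ A * exp (x + (1 + K) * t) := by
      gcongr
      exact le_add_of_nonneg_right (by positivity)
    linarith [hηt x hx]

lemma IsSolOn.le_of_le_init (hL : ∀ t, LipschitzOnWith K (f t) (Icc m M))
    (hu : IsSolOn f u (Ioi 0)) (hv : IsSolOn f v (Ioi 0))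
    (hum : ∀ x t, 0 < t → u x t ∈ Icc m M) (hvm : ∀ x t, 0 < t → v x t ∈ Icc m M)
    (hinit : ∀ R, ∀ η > 0, ∀ᶠ t in 𝓝[>] 0, ∀ x ∈ Icc (-R) R, u x t - v x t ≤ η)
    (x : ℝ) {t : ℝ} (ht : 0 < t) : u x t ≤ v x t := by
  have := hu.sub_le_exp (A := 0) le_rfl hL hv hum hvm (by simpa using hinit) x ht
  simpa using this

lemma eventually_forall_mem_Icc_lt {F : ℝ × ℝ → ℝ} {η : ℝ} (hF : Continuous F)
    (hF₀ : ∀ x, F (x, 0) < η) (R : ℝ) : ∀ᶠ t in 𝓝 0, ∀ x ∈ Icc (-R) R, F (x, t) < η :=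
  isCompact_Icc.eventually_forall_of_forall_eventually fun x _ =>
    (hF.comp continuous_swap).continuousAt.eventually_lt_const (hF₀ x)

theorem IsSolOn.le_of_le_of_entire (hL : ∀ t, LipschitzOnWith K (f t) (Icc m M))
    (hu : IsSolOn f u univ) (hv : IsSolOn f v univ) (hum : ∀ x t, u x t ∈ Icc m M)
    (hvm : ∀ x t, v x t ∈ Icc m M) {s : ℝ} (hs : ∀ x, u x s ≤ v x s) (x : ℝ) {t : ℝ}
    (hst : s ≤ t) : u x t ≤ v x t := by
  rcases hst.eq_or_lt with rfl | hst
  · exact hs x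
  have htr {w : ℝ → ℝ → ℝ} (hw : IsSolOn f w univ) :
      IsSolOn (fun t => f (t + s)) (fun x t => w x (t + s)) univ := by
    simpa using hw.translate 0 s (g := fun t => f (t + s)) (J := univ) (by simp) (by simp)
  simpa using IsSolOn.le_of_le_init (fun t => hL (t + s)) ((htr hu).mono (subset_univ _))
    ((htr hv).mono (subset_univ _)) (fun x t _ => hum x (t + s)) (fun x t _ => hvm x (t + s))
    (fun R η hη => ((eventually_forall_mem_Icc_lt
      ((htr hu).continuous.sub (htr hv).continuous) (fun x => by
        simpa using (sub_nonpos.2 (hs x)).trans_lt hη) R).filter_mono nhdsWithin_le_nhds).mono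
      fun t ht x hx => (ht x hx).le) x (sub_pos.2 hst)

end Solutions

/-! ### The strong maximum principle -/

/-- A bump of half-width `ρ` travelling with speed `c` and decaying at rate `B`. For large `B` it is
a subsolution where it is positive. -/
def movingBump (ρ c B x t : ℝ) : ℝ := exp (-B * t) * max (ρ ^ 2 - (x - c * t) ^ 2) 0 ^ 2

section MovingBump

variable {ρ c B x t : ℝ}

lemma continuous_movingBump : Continuous fun p : ℝ × ℝ => movingBump ρ c B p.1 p.2 := by
  unfold movingBump
  fun_prop

lemma movingBump_pos_iff : 0 < movingBump ρ c B x t ↔ 0 < ρ ^ 2 - (x - c * t) ^ 2 := by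
  rw [movingBump, mul_pos_iff_of_pos_left (exp_pos _), sq_pos_iff]
  exact ⟨fun h => not_le.1 fun hle => h (max_eq_right hle), fun h => (lt_max_of_lt_left h).ne'⟩

lemma movingBump_le (hB : 0 ≤ B) (ht : 0 ≤ t) : movingBump ρ c B x t ≤ ρ ^ 4 := by
  have hexp : exp (-B * t) ≤ 1 := exp_le_one_iff.2 (by nlinarith)
  have hq : max (ρ ^ 2 - (x - c * t) ^ 2) 0 ≤ ρ ^ 2 :=
    max_le (sub_le_self _ (sq_nonneg _)) (sq_nonneg _)
  calc movingBump ρ c B x t ≤ 1 * (ρ ^ 2) ^ 2 := by unfold movingBump; gcongr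
    _ = ρ ^ 4 := by ring

lemma movingBump_center : movingBump ρ c B (c * t) t = exp (-B * t) * ρ ^ 4 := by
  rw [movingBump, sub_self, max_eq_left (by simpa using sq_nonneg ρ)]
  ring

lemma hasDerivAt_time_bump : HasDerivAt (fun s => exp (-B * s) * (ρ ^ 2 - (x - c * s) ^ 2) ^ 2)
    (exp (-B * t) * (-B * (ρ ^ 2 - (x - c * t) ^ 2) ^ 2 +
      4 * c * (x - c * t) * (ρ ^ 2 - (x - c * t) ^ 2))) t := by
  have hexp : HasDerivAt (fun s => exp (-B * s)) (exp (-B * t) * -B) t := by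
    simpa using ((hasDerivAt_id t).const_mul (-B)).exp
  have hz : HasDerivAt (fun s => x - c * s) (-c) t := by
    simpa using ((hasDerivAt_id t).const_mul c).const_sub x
  refine (hexp.mul (((hz.pow 2).const_sub (ρ ^ 2)).pow 2)).congr_deriv ?_
  simp only [Pi.pow_apply, Nat.cast_ofNat]
  ring

lemma hasSecondDerivAt_bump :
    HasSecondDerivAt (fun z => exp (-B * t) * (ρ ^ 2 - (z - c * t) ^ 2) ^ 2)
      (exp (-B * t) * (8 * (x - c * t) ^ 2 - 4 * (ρ ^ 2 - (x - c * t) ^ 2))) x := by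
  have hz (z : ℝ) : HasDerivAt (fun z => z - c * t) 1 z := (hasDerivAt_id z).sub_const _
  have hq (z : ℝ) : HasDerivAt (fun z => ρ ^ 2 - (z - c * t) ^ 2) (-(2 * (z - c * t))) z := by
    simpa using ((hz z).fun_pow 2).const_sub (ρ ^ 2)
  refine .const_mul _ (.of_forall
    (g' := fun z => -4 * (z - c * t) * (ρ ^ 2 - (z - c * t) ^ 2)) (fun z => ?_) ?_)
  · refine ((hq z).fun_pow 2).congr_deriv ?_
    ring
  · refine (((hz x).const_mul (-4)).mul (hq x)).congr_deriv ?_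
    ring

lemma exists_isSubsolAt_movingBump (hρ : 0 < ρ) (c K : ℝ) :
    ∃ B, 0 ≤ B ∧ ∀ x t, 0 < movingBump ρ c B x t → IsSubsolAt K (movingBump ρ c B) x t := by
  -- The discriminant of `(B + K) q² - D q + 8 ρ²` vanishes for `B + K = D² / (32 ρ²)`.
  set D := 12 + 4 * |c| * ρ
  refine ⟨|K| + D ^ 2 / (32 * ρ ^ 2), by positivity, fun x t hpos => ?_⟩
  set B := |K| + D ^ 2 / (32 * ρ ^ 2)
  set z := x - c * t
  set q := ρ ^ 2 - z ^ 2
  have hqpos : 0 < q := movingBump_pos_iff.1 hpos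
  have hBK : D ^ 2 / (32 * ρ ^ 2) ≤ B + K := by linarith [neg_abs_le K]
  have hcz : c * z ≤ |c| * ρ := (le_abs_self _).trans <| by
    rw [abs_mul]
    gcongr
    exact abs_le_of_sq_le_sq (by linarith) hρ.le
  have hdisc : 0 ≤ D ^ 2 / (32 * ρ ^ 2) * q ^ 2 - D * q + 8 * ρ ^ 2 := by
    have : D ^ 2 / (32 * ρ ^ 2) * q ^ 2 - D * q + 8 * ρ ^ 2 =
        (D * q - 16 * ρ ^ 2) ^ 2 / (32 * ρ ^ 2) := by field_simp; ring
    rw [this]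
    positivity
  have hineq : -B * q ^ 2 + 4 * c * z * q ≤ 8 * z ^ 2 - 4 * q + K * q ^ 2 := by
    nlinarith [mul_le_mul_of_nonneg_right hBK (sq_nonneg q),
      mul_le_mul_of_nonneg_right hcz hqpos.le]
  have hnhds : ∀ᶠ p : ℝ × ℝ in 𝓝 (x, t), movingBump ρ c B p.1 p.2 =
      exp (-B * p.2) * (ρ ^ 2 - (p.1 - c * p.2) ^ 2) ^ 2 := by
    filter_upwards [continuous_movingBump.continuousAt.eventually_const_lt hpos] with p hp
    rw [movingBump, max_eq_left (movingBump_pos_iff.1 hp).le]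
  refine ⟨_, _, hasDerivAt_time_bump.congr_of_eventuallyEq
    ((Continuous.prodMk_right x).tendsto t |>.eventually hnhds),
    hasSecondDerivAt_bump.congr_of_eventuallyEq
      ((Continuous.prodMk_left t).tendsto x |>.eventually hnhds), ?_⟩
  rw [hnhds.self_of_nhds, mul_left_comm, ← mul_add]
  gcongr

end MovingBump

section StrongMaximumPrinciple

variable {f u v : ℝ → ℝ → ℝ} {K : NNReal} {m M : ℝ}

lemma mul_movingBump_le {ρ c B d : ℝ} {w : ℝ → ℝ} (hB : 0 ≤ B) (hρ : 0 < ρ) (hd : 0 ≤ d)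
    (hw : ∀ x, 0 ≤ w x) (hdw : ∀ x, |x| < ρ → d ≤ w x) (x : ℝ) :
    d / ρ ^ 4 * movingBump ρ c B x 0 ≤ w x := by
  rcases le_or_gt (movingBump ρ c B x 0) 0 with hle | hpos
  · exact (mul_nonpos_of_nonneg_of_nonpos (by positivity) hle).trans (hw x)
  · have hx : |x| < ρ := abs_lt_of_sq_lt_sq (by simpa using movingBump_pos_iff.1 hpos) hρ.le
    calc d / ρ ^ 4 * movingBump ρ c B x 0 ≤ d / ρ ^ 4 * ρ ^ 4 := by
          gcongr
          exact movingBump_le hB le_rfl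
      _ = d := div_mul_cancel₀ d (by positivity)
      _ ≤ w x := hdw x hx

lemma IsSolOn.lt_of_lt_zero (hL : ∀ t, LipschitzOnWith K (f t) (Icc m M))
    (hu : IsSolOn f u univ) (hv : IsSolOn f v univ) (hum : ∀ x t, u x t ∈ Icc m M)
    (hvm : ∀ x t, v x t ∈ Icc m M) (hvu : ∀ x t, v x t ≤ u x t) (h₀ : v 0 0 < u 0 0)
    (x : ℝ) {t : ℝ} (ht : 0 < t) : v x t < u x t := by
  obtain ⟨d, hd, hdu⟩ := exists_between (sub_pos.2 h₀)
  have hnhds : ∀ᶠ z in 𝓝 0, d < u z 0 - v z 0 :=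
    (hu.continuous.sub hv.continuous |>.comp (Continuous.prodMk_left 0)).tendsto 0
      |>.eventually_const_lt hdu
  obtain ⟨ρ, hρ, hball⟩ := Metric.eventually_nhds_iff.1 hnhds
  obtain ⟨c, hc⟩ : ∃ c, c * t = x := ⟨x / t, div_mul_cancel₀ x ht.ne'⟩
  obtain ⟨B, hB, hbump⟩ := exists_isSubsolAt_movingBump hρ c (-K)
  have hcont : Continuous fun q : ℝ × ℝ =>
      d / ρ ^ 4 * movingBump ρ c B q.1 q.2 + (v q.1 q.2 - u q.1 q.2) :=
    (continuous_movingBump.const_mul _).add (hv.continuous.sub hu.continuous)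
  have hle : d / ρ ^ 4 * movingBump ρ c B x t + (v x t - u x t) ≤ 0 := by
    refine nonpos_of_isSubsolAt (p := fun x t => d / ρ ^ 4 * movingBump ρ c B x t + (v x t - u x t))
      (M := d / ρ ^ 4 * ρ ^ 4) le_rfl hcont.continuousOn (fun x t ht => ?_)
      (fun x t _ hpos => ?_) (fun R η hη => ?_) x ht
    · linarith [mul_le_mul_of_nonneg_left (movingBump_le (ρ := ρ) (c := c) (x := x) hB ht.le)
        (by positivity : 0 ≤ d / ρ ^ 4), hvu x t]
    · have hb : 0 < movingBump ρ c B x t :=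
        pos_of_mul_pos_right (by linarith [hvu x t] : 0 < d / ρ ^ 4 * _) (by positivity)
      exact (((hbump x t hb).const_mul (by positivity)).add (hv.isSubsolAt_sub_of_ge hu
        (mem_univ t) (hL t) (hvm x t) (hum x t) (hvu x t))).mono (by simp) hpos.le
    · have hinit (x : ℝ) := mul_movingBump_le (c := c) hB hρ hd.le
        (fun x => sub_nonneg.2 (hvu x 0)) (fun x hx => (hball (by simpa using hx)).le) x
      exact ((eventually_forall_mem_Icc_lt hcont (fun x => by linarith [hinit x]) R).filter_mono
        nhdsWithin_le_nhds).mono fun t ht x hx => (ht x hx).le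
  rw [← hc, movingBump_center] at hle
  have : 0 < d / ρ ^ 4 * (exp (-B * t) * ρ ^ 4) := by positivity
  rw [← hc]
  linarith

theorem IsSolOn.lt_of_lt (hL : ∀ t, LipschitzOnWith K (f t) (Icc m M))
    (hu : IsSolOn f u univ) (hv : IsSolOn f v univ) (hum : ∀ x t, u x t ∈ Icc m M)
    (hvm : ∀ x t, v x t ∈ Icc m M) (hvu : ∀ x t, v x t ≤ u x t) {x₀ t₀ : ℝ}
    (h₀ : v x₀ t₀ < u x₀ t₀) (x : ℝ) {t : ℝ} (ht : t₀ < t) : v x t < u x t := by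
  have htr {w : ℝ → ℝ → ℝ} (hw : IsSolOn f w univ) :
      IsSolOn (fun t => f (t + t₀)) (fun x t => w (x + x₀) (t + t₀)) univ :=
    hw.translate x₀ t₀ (fun _ _ => mem_univ _) fun _ _ => rfl
  simpa using IsSolOn.lt_of_lt_zero (fun t => hL (t + t₀)) (htr hu) (htr hv)
    (fun _ _ => hum _ _) (fun _ _ => hvm _ _) (fun _ _ => hvu _ _) (by simpa using h₀) (x - x₀)
    (sub_pos.2 ht)

end StrongMaximumPrinciple

/-! ### Single crossing -/

section TwoPoint

variable {a b : ℝ → ℝ → ℝ} {K M : ℝ}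

-- The product `a⁺(x, t) b⁺(y, t)` is a subsolution on `{x < y}` vanishing on the diagonal;
-- evaluating `b` at `max x y` extends it by zero to the plane.
lemma isPlaneSubsolAt_posPart_mul_posPart
    (ha : ContinuousOn (fun q : ℝ × ℝ => a q.1 q.2) (univ ×ˢ Ioi 0))
    (hb : ContinuousOn (fun q : ℝ × ℝ => b q.1 q.2) (univ ×ˢ Ioi 0))
    (hasub : ∀ x t, 0 < t → 0 < a x t → IsSubsolAt K a x t)
    (hbsub : ∀ x t, 0 < t → 0 < b x t → IsSubsolAt K b x t)
    (hab : ∀ x t, 0 < t → a x t + b x t ≤ 0) {x y t : ℝ} (ht : 0 < t)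
    (hpos : 0 < (a x t)⁺ * (b (max x y) t)⁺) :
    IsPlaneSubsolAt (2 * K) (fun x y t => (a x t)⁺ * (b (max x y) t)⁺) x y t := by
  have hax : 0 < a x t := posPart_pos_iff.1 (pos_of_mul_pos_left hpos (posPart_nonneg _))
  have hbmax : 0 < b (max x y) t :=
    posPart_pos_iff.1 (pos_of_mul_pos_right hpos (posPart_nonneg _))
  have hxy : x < y := by
    by_contra! hyx
    rw [max_eq_left hyx] at hbmax
    linarith [hab x t ht]
  have hby : 0 < b y t := by rwa [max_eq_right hxy.le] at hbmax
  have hnhds {z : ℝ} : univ ×ˢ Ioi 0 ∈ 𝓝 (z, t) :=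
    (isOpen_univ.prod isOpen_Ioi).mem_nhds ⟨mem_univ z, ht⟩
  have hacont : ContinuousAt (fun z : ℝ × ℝ × ℝ => a z.1 z.2.2) (x, y, t) :=
    ContinuousAt.comp (x := (x, y, t)) (g := fun q : ℝ × ℝ => a q.1 q.2)
      (f := fun z : ℝ × ℝ × ℝ => (z.1, z.2.2)) (ha.continuousAt hnhds) (by fun_prop)
  have hbcont : ContinuousAt (fun z : ℝ × ℝ × ℝ => b z.2.1 z.2.2) (x, y, t) :=
    ContinuousAt.comp (x := (x, y, t)) (g := fun q : ℝ × ℝ => b q.1 q.2)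
      (f := fun z : ℝ × ℝ × ℝ => (z.2.1, z.2.2)) (hb.continuousAt hnhds) (by fun_prop)
  have hlt : ∀ᶠ z : ℝ × ℝ × ℝ in 𝓝 (x, y, t), z.1 < z.2.1 :=
    (continuous_fst.tendsto _).eventually_lt
      ((continuous_fst.comp continuous_snd).tendsto _) hxy
  refine ((hasub x t ht hax).mul (hbsub y t ht hby) hax.le hby.le).congr_of_eventuallyEq ?_
  filter_upwards [hacont.eventually_const_lt hax, hbcont.eventually_const_lt hby, hlt]
    with z hza hzb hz
  rw [posPart_of_nonneg hza.le, max_eq_right hz.le, posPart_of_nonneg hzb.le]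

theorem nonpos_of_pos_of_lt (hK : 0 ≤ K) (hM : 0 ≤ M)
    (ha : ContinuousOn (fun q : ℝ × ℝ => a q.1 q.2) (univ ×ˢ Ioi 0))
    (hb : ContinuousOn (fun q : ℝ × ℝ => b q.1 q.2) (univ ×ˢ Ioi 0))
    (haM : ∀ x t, 0 < t → a x t ≤ M) (hbM : ∀ x t, 0 < t → b x t ≤ M)
    (hasub : ∀ x t, 0 < t → 0 < a x t → IsSubsolAt K a x t)
    (hbsub : ∀ x t, 0 < t → 0 < b x t → IsSubsolAt K b x t)
    (hab : ∀ x t, 0 < t → a x t + b x t ≤ 0)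
    (hinit : ∀ R, ∀ η > 0, ∀ᶠ t in 𝓝[>] 0, ∀ x ∈ Icc (-R) R,
      a x t ≤ η ∨ ∀ y ∈ Icc x R, b y t ≤ η)
    {x y t : ℝ} (ht : 0 < t) (hxy : x < y) (hax : 0 < a x t) : b y t ≤ 0 := by
  have hpos_le {z C : ℝ} (hC : 0 ≤ C) (hz : z ≤ C) : z⁺ ≤ C := sup_le hz hC
  suffices (a x t)⁺ * (b (max x y) t)⁺ ≤ 0 by
    rw [max_eq_right hxy.le] at this
    exact posPart_nonpos.1 (nonpos_of_mul_nonpos_right this (posPart_pos_iff.2 hax))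
  refine nonpos_of_isPlaneSubsolAt (p := fun x y t => (a x t)⁺ * (b (max x y) t)⁺) (M := M * M)
    (mul_nonneg zero_le_two hK) ?_ (fun x y t ht => ?_)
    (fun x y t => isPlaneSubsolAt_posPart_mul_posPart ha hb hasub hbsub hab)
    (fun R η hη => ?_) x y ht
  · refine ContinuousOn.mul (ContinuousOn.sup ?_ continuousOn_const)
      (ContinuousOn.sup ?_ continuousOn_const)
    · exact ha.comp (f := fun q : ℝ × ℝ × ℝ => (q.1, q.2.2)) (by fun_prop)
        fun q hq => ⟨mem_univ _, hq⟩
    · exact hb.comp (f := fun q : ℝ × ℝ × ℝ => (max q.1 q.2.1, q.2.2)) (by fun_prop)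
        fun q hq => ⟨mem_univ _, hq⟩
  · exact mul_le_mul (hpos_le hM (haM x t ht)) (hpos_le hM (hbM _ t ht)) (posPart_nonneg _) hM
  · obtain ⟨ζ, hζ, hζM⟩ := exists_pos_mul_lt hη M
    filter_upwards [hinit R ζ hζ, self_mem_nhdsWithin] with t hinit ht x hx y hy
    refine le_trans ?_ hζM.le
    rcases hinit x hx with haζ | hbζ
    · rw [mul_comm M]
      exact mul_le_mul (hpos_le hζ.le haζ) (hpos_le hM (hbM _ t ht)) (posPart_nonneg _) hζ.le
    · exact mul_le_mul (hpos_le hM (haM x t ht))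
        (hpos_le hζ.le (hbζ _ ⟨le_max_left _ _, max_le hx.2 hy.2⟩)) (posPart_nonneg _) hM

end TwoPoint

/-- `g - h` changes sign at most once, and then from positive to negative. -/
def CrossesFromAbove (g h : ℝ → ℝ) : Prop := ∀ ⦃x y⦄, x < y → g x < h x → g y ≤ h y

lemma CrossesFromAbove.le_or_le {g h : ℝ → ℝ} (hgh : CrossesFromAbove g h)
    (hhg : CrossesFromAbove h g) : (∀ x, g x ≤ h x) ∨ ∀ x, h x ≤ g x := by
  by_contra! hne
  obtain ⟨⟨x, hx⟩, y, hy⟩ := hne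
  rcases lt_trichotomy x y with hxy | rfl | hyx
  · exact (hhg hxy hx).not_gt hy
  · exact hx.not_gt hy
  · exact (hgh hyx hy).not_gt hx

/-! ### The solution with Heaviside initial datum -/

namespace IsHeavisideSol

variable {f u W : ℝ → ℝ → ℝ} {ω : ℝ → ℝ} {K : NNReal} {M : ℝ}

section InitialDatum

variable {α η δ : ℝ}

lemma eventually_lt (hu : IsHeavisideSol f α 0 ω u) (hδ : 0 < δ) (hη : 0 < η) (R : ℝ) :
    ∀ᶠ t in 𝓝[>] 0, ∀ x ∈ Icc δ R, u x t < η := by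
  obtain ⟨t₀, ht₀, hlt⟩ := hu.2.2 (Icc δ R) isCompact_Icc (fun h => hδ.not_ge h.1) η hη
  filter_upwards [Ioo_mem_nhdsGT ht₀] with t ht x hx
  have := hlt t ht x hx
  rw [if_neg (by linarith [hx.1]), mul_zero, sub_zero] at this
  exact (le_abs_self _).trans_lt this

lemma eventually_sub_lt (hu : IsHeavisideSol f (ω 0) 0 ω u) (hω : Continuous ω) (hδ : 0 < δ)
    (hη : 0 < η) (R : ℝ) : ∀ᶠ t in 𝓝[>] 0, ∀ x ∈ Icc (-R) (-δ), ω t - u x t < η := by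
  obtain ⟨t₀, ht₀, hlt⟩ := hu.2.2 (Icc (-R) (-δ)) isCompact_Icc
    (fun h => by linarith [h.2]) (η / 2) (half_pos hη)
  have hωlt : ∀ᶠ t in 𝓝[>] 0, ω t < ω 0 + η / 2 :=
    ((hω.tendsto 0).mono_left nhdsWithin_le_nhds).eventually_lt_const (by linarith)
  filter_upwards [Ioo_mem_nhdsGT ht₀, hωlt] with t ht hωt x hx
  have := hlt t ht x hx
  rw [if_pos (by linarith [hx.2]), mul_one, abs_lt] at this
  linarith [this.1]

lemma mem_Icc (hu : IsHeavisideSol f α 0 ω u) (hωM : ∀ t, ω t ≤ M) (x : ℝ) {t : ℝ} (ht : 0 < t) :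
    u x t ∈ Icc 0 M :=
  ⟨(hu.2.1 x t ht).1, (hu.2.1 x t ht).2.trans (hωM t)⟩

lemma bound_nonneg (hu : IsHeavisideSol f α 0 ω u) (hωM : ∀ t, ω t ≤ M) : 0 ≤ M :=
  (hu.mem_Icc hωM 0 one_pos).1.trans (hu.mem_Icc hωM 0 one_pos).2

end InitialDatum

lemma antitone (hu : IsHeavisideSol f (ω 0) 0 ω u) (hω : Continuous ω) (hωM : ∀ t, ω t ≤ M)
    (hL : ∀ t, LipschitzOnWith K (f t) (Icc 0 M)) {t : ℝ} (ht : 0 < t) :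
    Antitone fun x => u x t := by
  intro x y hxy
  rcases hxy.eq_or_lt with rfl | hxy
  · exact le_rfl
  obtain ⟨h, hh, rfl⟩ : ∃ h > 0, y = x + h := ⟨y - x, sub_pos.2 hxy, by ring⟩
  refine IsSolOn.le_of_le_init hL (hu.1.translate_space h) hu.1
    (fun x t ht => hu.mem_Icc hωM _ ht) (fun x t ht => hu.mem_Icc hωM x ht) (fun R η hη => ?_) x ht
  filter_upwards [hu.eventually_lt (half_pos hh) hη (R + h),
    hu.eventually_sub_lt hω (half_pos hh) hη R, self_mem_nhdsWithin] with t hright hleft ht x hx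
  rcases le_total x (-(h / 2)) with hxh | hxh
  · linarith [hleft x ⟨hx.1, hxh⟩, (hu.2.1 (x + h) t ht).2]
  · linarith [hright (x + h) ⟨by linarith, by linarith [hx.2]⟩, (hu.2.1 x t ht).1]

lemma le_exp (hu : IsHeavisideSol f (ω 0) 0 ω u) (hωM : ∀ t, ω t ≤ M)
    (hf : Continuous (Function.uncurry f)) (hf0 : ∀ t, f t 0 = 0)
    (hL : ∀ t, LipschitzOnWith K (f t) (Icc 0 M)) (x : ℝ) {t : ℝ} (ht : 0 < t) :
    u x t ≤ M * exp 1 * exp (-x + (1 + K) * t) := by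
  have hM := hu.bound_nonneg hωM
  have hzero : IsSolOn f (fun _ _ => 0) (Ioi 0) :=
    .of_ode hf (ω := fun _ => 0) (fun t => by simpa [hf0] using hasDerivAt_const t (0 : ℝ)) _
  suffices u (- -x) t - 0 ≤ M * exp 1 * exp (-x + (1 + K) * t) by simpa using this
  refine hu.1.reflect.sub_le_exp (by positivity) hL hzero (fun x t ht => hu.mem_Icc hωM _ ht)
    (fun _ _ _ => ⟨le_rfl, hM⟩) (fun R η hη => ?_) (-x) ht
  filter_upwards [hu.eventually_lt one_pos hη R, self_mem_nhdsWithin] with t hright ht x hx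
  rcases le_total x (-1) with hx1 | hx1
  · linarith [hright (-x) ⟨by linarith, by linarith [hx.1]⟩,
      (by positivity : 0 ≤ M * exp 1 * exp x)]
  · rw [mul_assoc, ← exp_add]
    linarith [(hu.mem_Icc hωM (-x) ht).2,
      le_mul_of_one_le_right hM (one_le_exp (by linarith : 0 ≤ 1 + x))]

lemma sub_le_exp (hu : IsHeavisideSol f (ω 0) 0 ω u) (hωM : ∀ t, ω t ≤ M)
    (hf : Continuous (Function.uncurry f)) (hω : ∀ t, HasDerivAt ω (f t (ω t)) t)
    (hL : ∀ t, LipschitzOnWith K (f t) (Icc 0 M)) (x : ℝ) {t : ℝ} (ht : 0 < t) :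
    ω t - u x t ≤ M * exp 1 * exp (x + (1 + K) * t) := by
  have hM := hu.bound_nonneg hωM
  have hωc : Continuous ω := continuous_iff_continuousAt.2 fun t => (hω t).continuousAt
  refine (IsSolOn.of_ode hf hω (Ioi 0)).sub_le_exp (by positivity) hL hu.1
    (fun x t ht => ⟨(hu.2.1 x t ht).1.trans (hu.2.1 x t ht).2, hωM t⟩)
    (fun x t ht => hu.mem_Icc hωM x ht) (fun R η hη => ?_) x ht
  filter_upwards [hu.eventually_sub_lt hωc one_pos hη R, self_mem_nhdsWithin] with t hleft ht x hx
  rcases le_total x (-1) with hx1 | hx1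
  · linarith [hleft x ⟨hx.1, hx1⟩, (by positivity : 0 ≤ M * exp 1 * exp x)]
  · rw [mul_assoc, ← exp_add]
    linarith [(hu.2.1 x t ht).1, hωM t,
      le_mul_of_one_le_right hM (one_le_exp (by linarith : 0 ≤ 1 + x))]

lemma translate_le_of_translate_lt (hu : IsHeavisideSol f (ω 0) 0 ω u) (hω : Continuous ω)
    (hωM : ∀ t, ω t ≤ M) (hL : ∀ t, LipschitzOnWith K (f t) (Icc 0 M))
    (hW : IsSolOn f W (Ioi 0)) (hWω : ∀ x t, 0 < t → W x t ∈ Icc 0 (ω t)) {h x y t : ℝ}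
    (hh : 0 < h) (ht : 0 < t) (hxy : x < y) (hux : u (x + -h) t < W x t) :
    u (y + h) t ≤ W y t := by
  have hum (x t : ℝ) (ht : 0 < t) := hu.mem_Icc hωM x ht
  have hWm (x t : ℝ) (ht : 0 < t) : W x t ∈ Icc 0 M :=
    ⟨(hWω x t ht).1, (hWω x t ht).2.trans (hωM t)⟩
  have hleft := hu.1.translate_space (-h)
  have hright := hu.1.translate_space h
  have hcont {w : ℝ → ℝ → ℝ} (hw : IsSolOn f w (Ioi 0)) := hw.continuousOn isOpen_Ioi
  suffices u (y + h) t - W y t ≤ 0 by linarith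
  refine nonpos_of_pos_of_lt (a := fun x t => W x t - u (x + -h) t)
    (b := fun x t => u (x + h) t - W x t) K.2 (hu.bound_nonneg hωM)
    ((hcont hW).sub (hcont hleft)) ((hcont hright).sub (hcont hW))
    (fun x t ht => by linarith [(hWm x t ht).2, (hum (x + -h) t ht).1])
    (fun x t ht => by linarith [(hWm x t ht).1, (hum (x + h) t ht).2])
    (fun x t ht hpos => hW.isSubsolAt_sub_of_le hleft ht (hL t) (hWm x t ht) (hum _ t ht)
      (sub_pos.1 hpos).le)
    (fun x t ht hpos => hright.isSubsolAt_sub_of_le hW ht (hL t) (hum _ t ht) (hWm x t ht)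
      (sub_pos.1 hpos).le)
    (fun x t ht => by linarith [hu.antitone hω hωM hL ht (by linarith : x + -h ≤ x + h)])
    (fun R η hη => ?_) ht hxy (sub_pos.2 hux)
  filter_upwards [hu.eventually_lt hh hη (R + h), hu.eventually_sub_lt hω hh hη (R + h),
    self_mem_nhdsWithin] with t hsmall hlarge ht x hx
  rcases le_total x 0 with hx0 | hx0
  · left
    linarith [hlarge (x + -h) ⟨by linarith [hx.1], by linarith⟩, (hWω x t ht).2]
  · right
    intro y hy
    linarith [hsmall (y + h) ⟨by linarith [hy.1], by linarith [hy.2]⟩, (hWm y t ht).1]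

theorem crossesFromAbove (hu : IsHeavisideSol f (ω 0) 0 ω u) (hω : Continuous ω)
    (hωM : ∀ t, ω t ≤ M) (hL : ∀ t, LipschitzOnWith K (f t) (Icc 0 M))
    (hW : IsSolOn f W (Ioi 0)) (hWω : ∀ x t, 0 < t → W x t ∈ Icc 0 (ω t)) {t : ℝ} (ht : 0 < t) :
    CrossesFromAbove (fun x => u x t) fun x => W x t := by
  intro x y hxy hux
  have hcont : Continuous fun x => u x t :=
    (hu.1.continuousOn isOpen_Ioi).comp_continuous (Continuous.prodMk_left t)
      fun x => ⟨mem_univ x, ht⟩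
  have hleft : Tendsto (fun h => u (x + -h) t) (𝓝[>] 0) (𝓝 (u x t)) := by
    have : Continuous fun h => u (x + -h) t := hcont.comp (continuous_const.add continuous_neg)
    simpa using (this.tendsto 0).mono_left nhdsWithin_le_nhds
  have hright : Tendsto (fun h => u (y + h) t) (𝓝[>] 0) (𝓝 (u y t)) := by
    have : Continuous fun h => u (y + h) t := hcont.comp (continuous_const_add y)
    simpa using (this.tendsto 0).mono_left nhdsWithin_le_nhds
  refine le_of_tendsto hright ?_
  filter_upwards [hleft.eventually_lt_const hux, self_mem_nhdsWithin] with h hlt hh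
  exact hu.translate_le_of_translate_lt hω hωM hL hW hWω hh ht hxy hlt

end IsHeavisideSol

/-! ### Spatial limits of bounded entire solutions -/

section Calculus

variable {F F' F'' : ℝ → ℝ} {c L : ℝ}

lemma tendsto_add_one_sub_of_tendsto_deriv (hF : ∀ x, HasDerivAt F (F' x) x)
    (hF' : Tendsto F' atTop (𝓝 c)) : Tendsto (fun x => F (x + 1) - F x) atTop (𝓝 c) := by
  have hmvt (x : ℝ) : ∃ ξ, x ≤ ξ ∧ F' ξ = F (x + 1) - F x := by
    obtain ⟨ξ, hξ, heq⟩ := exists_hasDerivAt_eq_slope F F' (lt_add_one x)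
      (fun y _ => (hF y).continuousAt.continuousWithinAt) fun y _ => hF y
    exact ⟨ξ, hξ.1.le, by rw [heq, add_sub_cancel_left, div_one]⟩
  choose ξ hξ heq using hmvt
  exact (hF'.comp (tendsto_atTop_mono hξ tendsto_id)).congr heq

lemma eq_zero_of_tendsto_of_tendsto_deriv_deriv (hF : ∀ x, HasDerivAt F (F' x) x)
    (hF' : ∀ x, HasDerivAt F' (F'' x) x) (hL : Tendsto F atTop (𝓝 L))
    (hc : Tendsto F'' atTop (𝓝 c)) : c = 0 := by
  have hshift : Tendsto (fun x : ℝ => x + 1) atTop atTop :=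
    tendsto_atTop_add_const_right _ _ tendsto_id
  have hΔ : Tendsto (fun x => F (x + 1) - F x) atTop (𝓝 0) := by
    simpa using (hL.comp hshift).sub hL
  have hΔΔ : Tendsto (fun x => (F (x + 1 + 1) - F (x + 1)) - (F (x + 1) - F x)) atTop (𝓝 c) :=
    tendsto_add_one_sub_of_tendsto_deriv (fun x => ((hF (x + 1)).comp_add_const x 1).sub (hF x))
      (tendsto_add_one_sub_of_tendsto_deriv hF' hc)
  exact tendsto_nhds_unique hΔΔ (by simpa using (hΔ.comp hshift).sub hΔ)

end Calculus

lemma hasDerivAt_intervalIntegral_of_continuous {G G' : ℝ → ℝ → ℝ}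
    (hG : Continuous (Function.uncurry G)) (hG' : Continuous (Function.uncurry G'))
    (hderiv : ∀ x r, HasDerivAt (fun y => G y r) (G' x r) x) (s t x : ℝ) :
    HasDerivAt (fun y => ∫ r in s..t, G y r) (∫ r in s..t, G' x r) x := by
  obtain ⟨C, hC⟩ := ((isCompact_closedBall x 1).prod (isCompact_uIcc (a := s) (b := t)))
    |>.exists_bound_of_continuousOn hG'.continuousOn
  refine (intervalIntegral.hasDerivAt_integral_of_dominated_loc_of_deriv_le
    (Metric.closedBall_mem_nhds x one_pos)
    (.of_forall fun y => (hG.uncurry_left y).aestronglyMeasurable)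
    ((hG.uncurry_left x).intervalIntegrable s t) (hG'.uncurry_left x).aestronglyMeasurable
    (.of_forall fun r hr y hy => hC (y, r) ⟨hy, uIoc_subset_uIcc hr⟩)
    (bound := fun _ => C) intervalIntegrable_const
    (.of_forall fun r _ y _ => hderiv y r)).2

section SpatialLimit

variable {f u : ℝ → ℝ → ℝ} {ω : ℝ → ℝ} {m M : ℝ}

lemma exists_norm_le_on_uIcc (hf : Continuous (Function.uncurry f)) (s t m M : ℝ) :
    ∃ C, ∀ r ∈ uIcc s t, ∀ v ∈ Icc m M, ‖f r v‖ ≤ C := by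
  obtain ⟨C, hC⟩ := ((isCompact_uIcc (a := s) (b := t)).prod (isCompact_Icc (a := m) (b := M)))
    |>.exists_bound_of_continuousOn hf.continuousOn
  exact ⟨C, fun r hr v hv => hC (r, v) ⟨hr, hv⟩⟩

lemma intervalIntegrable_comp_of_mem_Icc (hf : Continuous (Function.uncurry f))
    (hω : Measurable ω) (hωm : ∀ t, ω t ∈ Icc m M) (s t : ℝ) :
    IntervalIntegrable (fun r => f r (ω r)) MeasureTheory.volume s t := by
  obtain ⟨C, hC⟩ := exists_norm_le_on_uIcc hf s t m M
  refine (intervalIntegrable_const (c := C)).mono_fun'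
    (hf.measurable.comp (measurable_id.prodMk hω)).aestronglyMeasurable ?_
  refine (MeasureTheory.ae_restrict_iff' measurableSet_uIoc).2 (.of_forall fun r hr => ?_)
  exact hC r (uIoc_subset_uIcc hr) (ω r) (hωm r)

lemma hasDerivAt_of_sub_eq_integral (hf : Continuous (Function.uncurry f))
    (hω : Measurable ω) (hωm : ∀ t, ω t ∈ Icc m M)
    (hint : ∀ s t, ω t - ω s = ∫ r in s..t, f r (ω r)) (t : ℝ) :
    HasDerivAt ω (f t (ω t)) t := by
  have heq : ω = fun t => ω 0 + ∫ r in (0 : ℝ)..t, f r (ω r) :=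
    funext fun t => by rw [← hint]; ring
  have hωc : Continuous ω := by
    rw [heq]
    exact continuous_const.add
      (intervalIntegral.continuous_primitive (intervalIntegrable_comp_of_mem_Icc hf hω hωm) 0)
  have hfω : Continuous fun r => f r (ω r) := hf.comp (continuous_id.prodMk hωc)
  have hderiv := (hfω.integral_hasStrictDerivAt 0 t).hasDerivAt.const_add (ω 0)
  rwa [← heq] at hderiv

namespace IsSolOn

lemma continuous_time (hu : IsSolOn f u univ) (x : ℝ) : Continuous (u x) :=
  Continuous.uncurry_left x hu.continuous

lemma exists_integral_hasSecondDeriv (hf : Continuous (Function.uncurry f))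
    (hu : IsSolOn f u univ) (s t : ℝ) : ∃ F' : ℝ → ℝ,
      (∀ x, HasDerivAt (fun x => ∫ r in s..t, u x r) (F' x) x) ∧
      ∀ x, HasDerivAt F' (u x t - u x s - ∫ r in s..t, f r (u x r)) x := by
  have huc := hu.continuous
  obtain ⟨ut, ux, uxx, hut, hux, huxx, hutc, huxc, huxxc, heq⟩ := hu
  simp only [univ_prod_univ, continuousOn_univ] at hutc huxc huxxc
  refine ⟨fun x => ∫ r in s..t, ux x r, hasDerivAt_intervalIntegral_of_continuous huc huxc
    (fun x r => hux x r (mem_univ r)) s t, fun x => ?_⟩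
  have hfu : Continuous fun r => f r (u x r) :=
    hf.comp (continuous_id.prodMk (Continuous.uncurry_left x huc))
  have hftc : ∫ r in s..t, ut x r = u x t - u x s :=
    intervalIntegral.integral_eq_sub_of_hasDerivAt (fun r _ => hut x r (mem_univ r))
      ((Continuous.uncurry_left x hutc).intervalIntegrable s t)
  rw [← hftc, ← intervalIntegral.integral_sub
    ((Continuous.uncurry_left x hutc).intervalIntegrable s t) (hfu.intervalIntegrable s t)]
  simp only [heq x _ (mem_univ _), add_sub_cancel_right]
  exact hasDerivAt_intervalIntegral_of_continuous huxc huxxc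
    (fun x r => huxx x r (mem_univ r)) s t x

lemma sub_eq_integral_of_tendsto_atTop (hf : Continuous (Function.uncurry f))
    (hu : IsSolOn f u univ) (hum : ∀ x t, u x t ∈ Icc m M)
    (hlim : ∀ t, Tendsto (fun x => u x t) atTop (𝓝 (ω t))) (s t : ℝ) :
    ω t - ω s = ∫ r in s..t, f r (ω r) := by
  have hdom {g : ℝ → ℝ → ℝ} (hg : Continuous (Function.uncurry g)) :
      Tendsto (fun x => ∫ r in s..t, g r (u x r)) atTop (𝓝 (∫ r in s..t, g r (ω r))) := by
    obtain ⟨C, hC⟩ := exists_norm_le_on_uIcc hg s t m M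
    exact intervalIntegral.tendsto_integral_filter_of_dominated_convergence (fun _ => C)
      (.of_forall fun x =>
        (hg.comp (continuous_id.prodMk (hu.continuous_time x))).aestronglyMeasurable)
      (.of_forall fun x => .of_forall fun r hr => hC r (uIoc_subset_uIcc hr) _ (hum x r))
      intervalIntegrable_const
      (.of_forall fun r _ => ((hg.uncurry_left r).tendsto (ω r)).comp (hlim r))
  obtain ⟨F', hF, hF'⟩ := hu.exists_integral_hasSecondDeriv hf s t
  exact sub_eq_zero.1 (eq_zero_of_tendsto_of_tendsto_deriv_deriv hF hF'
    (hdom (g := fun _ v => v) continuous_snd) (((hlim t).sub (hlim s)).sub (hdom hf)))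

theorem hasDerivAt_of_tendsto_atTop (hf : Continuous (Function.uncurry f))
    (hu : IsSolOn f u univ) (hum : ∀ x t, u x t ∈ Icc m M)
    (hlim : ∀ t, Tendsto (fun x => u x t) atTop (𝓝 (ω t))) (t : ℝ) :
    HasDerivAt ω (f t (ω t)) t := by
  have hω : Measurable ω := measurable_of_tendsto_metrizable
    (fun n : ℕ => (hu.continuous_time n).measurable)
    (tendsto_pi_nhds.2 fun t => (hlim t).comp tendsto_natCast_atTop_atTop)
  have hωm (t : ℝ) : ω t ∈ Icc m M :=
    isClosed_Icc.mem_of_tendsto (hlim t) (.of_forall fun x => hum x t)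
  exact hasDerivAt_of_sub_eq_integral hf hω hωm (hu.sub_eq_integral_of_tendsto_atTop hf hum hlim) t

end IsSolOn

lemma LimitAtPlusInf.tendsto (hlim : LimitAtPlusInf u ω) (t : ℝ) :
    Tendsto (fun x => u x t) atTop (𝓝 (ω t)) := by
  refine Metric.tendsto_atTop.2 fun ε hε => ?_
  obtain ⟨X, hX⟩ := hlim {t} isCompact_singleton ε hε
  exact ⟨X, fun x hx => hX x hx t rfl⟩

lemma LimitAtMinusInf.tendsto (hlim : LimitAtMinusInf u ω) (t : ℝ) :
    Tendsto (fun x => u x t) atBot (𝓝 (ω t)) := by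
  refine Metric.tendsto_nhds.2 fun ε hε => ?_
  obtain ⟨X, hX⟩ := hlim {t} isCompact_singleton ε hε
  exact eventually_atBot.2 ⟨X, fun x hx => hX x hx t rfl⟩

lemma LimitAtPlusInf.limitAtMinusInf_of_reflect (hlim : LimitAtPlusInf (fun x t => u (-x) t) ω) :
    LimitAtMinusInf u ω := by
  intro S hS ε hε
  obtain ⟨X, hX⟩ := hlim S hS ε hε
  exact ⟨-X, fun x hx t ht => by simpa using hX (-x) (le_neg_of_le_neg hx) t ht⟩

lemma limitAtPlusInf_of_tendstoLocallyUniformly (hlim : TendstoLocallyUniformly u ω atTop) :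
    LimitAtPlusInf u ω := by
  intro S hS ε hε
  have hunif := (tendstoLocallyUniformlyOn_iff_tendstoUniformlyOn_of_compact hS).1
    hlim.tendstoLocallyUniformlyOn
  obtain ⟨X, hX⟩ := eventually_atTop.1 (Metric.tendstoUniformlyOn_iff.1 hunif ε hε)
  exact ⟨X, fun x hx t ht => by simpa [Real.dist_eq, abs_sub_comm] using hX x hx t ht⟩

theorem IsSolOn.exists_limitAtPlusInf (hf : Continuous (Function.uncurry f))
    (hu : IsSolOn f u univ) (hum : ∀ x t, u x t ∈ Icc m M) (hanti : ∀ t, Antitone fun x => u x t) :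
    ∃ ω : ℝ → ℝ, (∀ t, HasDerivAt ω (f t (ω t)) t) ∧ LimitAtPlusInf u ω := by
  have hlim (t : ℝ) : Tendsto (fun x => u x t) atTop (𝓝 (⨅ x, u x t)) :=
    tendsto_atTop_ciInf (hanti t) ⟨m, forall_mem_range.2 fun x => (hum x t).1⟩
  have hode := hu.hasDerivAt_of_tendsto_atTop hf hum hlim
  exact ⟨_, hode, limitAtPlusInf_of_tendstoLocallyUniformly
    (Antitone.tendstoLocallyUniformly_of_forall_tendsto
      hu.continuous_time (fun x y hxy t => hanti t hxy)
      (continuous_iff_continuousAt.2 fun t => (hode t).continuousAt) hlim)⟩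

theorem IsSolOn.exists_limitAtMinusInf (hf : Continuous (Function.uncurry f))
    (hu : IsSolOn f u univ) (hum : ∀ x t, u x t ∈ Icc m M) (hanti : ∀ t, Antitone fun x => u x t) :
    ∃ ω : ℝ → ℝ, (∀ t, HasDerivAt ω (f t (ω t)) t) ∧ LimitAtMinusInf u ω := by
  have hmono (t : ℝ) : Monotone fun x => u (-x) t := (hanti t).comp fun _ _ => neg_le_neg
  have hlim (t : ℝ) : Tendsto (fun x => u (-x) t) atTop (𝓝 (⨆ x, u (-x) t)) :=
    tendsto_atTop_ciSup (hmono t) ⟨M, forall_mem_range.2 fun x => (hum (-x) t).2⟩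
  have hode := hu.reflect.hasDerivAt_of_tendsto_atTop hf (fun x t => hum (-x) t) hlim
  exact ⟨_, hode, (limitAtPlusInf_of_tendstoLocallyUniformly
    (Monotone.tendstoLocallyUniformly_of_forall_tendsto
      (fun x => hu.continuous_time (-x)) (fun x y hxy t => hmono t hxy)
      (continuous_iff_continuousAt.2 fun t => (hode t).continuousAt)
      hlim)).limitAtMinusInf_of_reflect⟩

end SpatialLimit

/-! ### Entire solutions nonincreasing in space -/

lemma eq_of_antitone_of_le_add {g : ℝ → ℝ} (hg : Antitone g) {h : ℝ} (hh : 0 < h)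
    (hle : ∀ x, g x ≤ g (x + h)) (x y : ℝ) : g x = g y := by
  have hper : Function.Periodic g h := fun x => (hg (by linarith)).antisymm (hle x)
  have key (x y : ℝ) : g x ≤ g y := by
    obtain ⟨n, hn⟩ := Archimedean.arch (y - x) hh
    rw [nsmul_eq_mul] at hn
    exact (hper.nat_mul n x).symm.le.trans (hg (by linarith))
  exact (key x y).antisymm (key y x)

lemma exists_eq_translate_of_ordered {g h : ℝ → ℝ} (hg : StrictAnti g) (hh : Continuous h)
    (hord : ∀ a, (∀ x, h (x + a) ≤ g x) ∨ ∀ x, g x ≤ h (x + a))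
    (hlt : ¬∀ y, h y < g 0) (hgt : ¬∀ y, g 0 < h y) : ∃ a, ∀ x, g x = h (x + a) := by
  have hcont (x : ℝ) : Continuous fun a => h (x + a) := hh.comp (continuous_const_add x)
  have hclosed_le : IsClosed {a | ∀ x, h (x + a) ≤ g x} := by
    simp only [ofPred_forall]
    exact isClosed_iInter fun x => isClosed_le (hcont x) continuous_const
  have hclosed_ge : IsClosed {a | ∀ x, g x ≤ h (x + a)} := by
    simp only [ofPred_forall]
    exact isClosed_iInter fun x => isClosed_le continuous_const (hcont x)
  have hnonempty_le : {a | ∀ x, h (x + a) ≤ g x}.Nonempty := by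
    by_contra hempty
    refine hgt fun y => (hg neg_one_lt_zero).trans_le ?_
    simpa using (hord (y + 1)).resolve_left (fun h => hempty ⟨_, h⟩) (-1)
  have hnonempty_ge : {a | ∀ x, g x ≤ h (x + a)}.Nonempty := by
    by_contra hempty
    refine hlt fun y => lt_of_le_of_lt ?_ (hg one_pos)
    simpa using (hord (y - 1)).resolve_right (fun h => hempty ⟨_, h⟩) 1
  obtain ⟨a, -, hle, hge⟩ := isPreconnected_closed_iff.1 isPreconnected_univ _ _ hclosed_le
    hclosed_ge (fun a _ => hord a) (by simpa using hnonempty_le) (by simpa using hnonempty_ge)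
  exact ⟨a, fun x => (hge x).antisymm (hle x)⟩

section EntireSolutions

variable {f u v : ℝ → ℝ → ℝ} {K : NNReal} {m M T : ℝ}

lemma isPeriodicSol_of_eq {ω : ℝ → ℝ} (hL : ∀ t, LipschitzOnWith K (f t) (Icc m M))
    (hfper : ∀ t v, f (t + T) v = f t v) (hω : ∀ t, HasDerivAt ω (f t (ω t)) t)
    (hωm : ∀ t, ω t ∈ Icc m M) {t₀ : ℝ} (heq : ω (t₀ + T) = ω t₀) : IsPeriodicSol f T ω := by
  have hshift (t : ℝ) : HasDerivAt (fun t => ω (t + T)) (f t (ω (t + T))) t := by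
    simpa only [hfper] using (hω (t + T)).comp_add_const t T
  exact ⟨hω, congrFun (ODE_solution_unique_univ (s := fun _ => Icc m M) hL
    (fun t => ⟨hshift t, hωm _⟩) (fun t => ⟨hω t, hωm t⟩) heq)⟩

lemma pos_of_pos_of_hasDerivAt {ω : ℝ → ℝ} (hL : ∀ t, LipschitzOnWith K (f t) (Icc 0 M))
    (hf0 : ∀ t, f t 0 = 0) (hω : ∀ t, HasDerivAt ω (f t (ω t)) t) (hωm : ∀ t, ω t ∈ Icc 0 M)
    {t₀ : ℝ} (hpos : 0 < ω t₀) (t : ℝ) : 0 < ω t := by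
  have hzero (t : ℝ) : HasDerivAt (fun _ => (0 : ℝ)) (f t 0) t := by
    simpa only [hf0] using hasDerivAt_const t (0 : ℝ)
  refine (hωm t).1.lt_of_ne' fun ht => hpos.ne' ?_
  exact congrFun (ODE_solution_unique_univ (s := fun _ => Icc 0 M) hL
    (fun t => ⟨hω t, hωm t⟩) (fun t => ⟨hzero t, le_rfl, (hωm t).1.trans (hωm t).2⟩) ht) t₀

namespace IsSolOn

theorem strictAnti_or_const (hL : ∀ t, LipschitzOnWith K (f t) (Icc m M)) (hu : IsSolOn f u univ)
    (hum : ∀ x t, u x t ∈ Icc m M) (hanti : ∀ t, Antitone fun x => u x t) (t₀ : ℝ) :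
    StrictAnti (fun x => u x t₀) ∨ ∀ x y t, u x t = u y t := by
  refine or_iff_not_imp_left.2 fun hstrict => ?_
  obtain ⟨x₀, h, hh, hx₀⟩ : ∃ x₀ h, 0 < h ∧ u x₀ t₀ ≤ u (x₀ + h) t₀ := by
    simp only [StrictAnti, not_forall, not_lt] at hstrict
    obtain ⟨x, y, hxy, hle⟩ := hstrict
    exact ⟨x, y - x, sub_pos.2 hxy, by simpa using hle⟩
  have hpast (x y t : ℝ) (ht : t < t₀) : u x t = u y t := by
    refine eq_of_antitone_of_le_add (hanti t) hh (fun x => ?_) x y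
    by_contra! hlt
    exact hx₀.not_gt (lt_of_lt hL hu (hu.translate_space h) hum (fun x t => hum _ t)
      (fun x t => hanti t (by linarith)) hlt x₀ ht)
  have hle (x y t : ℝ) : u x t ≤ u y t := by
    rcases lt_or_ge t t₀ with ht | ht
    · exact (hpast x y t ht).le
    · simpa using le_of_le_of_entire hL hu (hu.translate_space (y - x)) hum (fun x t => hum _ t)
        (fun z => (hpast z _ (t₀ - 1) (by linarith)).le) x (by linarith : t₀ - 1 ≤ t)
  exact fun x y t => (hle x y t).antisymm (hle y x t)

lemma hasDerivAt_of_const (hu : IsSolOn f u univ) (hconst : ∀ x y t, u x t = u y t) (x t : ℝ) :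
    HasDerivAt (u x) (f t (u x t)) t := by
  obtain ⟨ut, ux, uxx, hut, hux, huxx, -, -, -, heq⟩ := hu
  have hux_zero (y : ℝ) : ux y t = 0 := by
    have := hux y t (mem_univ t)
    rw [funext fun z => hconst z 0 t] at this
    exact this.unique (hasDerivAt_const y _)
  have huxx_zero : uxx x t = 0 := by
    have := huxx x t (mem_univ t)
    rw [funext hux_zero] at this
    exact this.unique (hasDerivAt_const x _)
  simpa [heq x t (mem_univ t), huxx_zero] using hut x t (mem_univ t)

theorem isPeriodicSol_of_const (hL : ∀ t, LipschitzOnWith K (f t) (Icc m M))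
    (hfper : ∀ t v, f (t + T) v = f t v) (hu : IsSolOn f u univ) (hum : ∀ x t, u x t ∈ Icc m M)
    (hconst : ∀ x y t, u x t = u y t) (hlt : ¬∀ y, u y T < u 0 0) (hgt : ¬∀ y, u 0 0 < u y T) :
    IsPeriodicSol f T (u 0) := by
  refine isPeriodicSol_of_eq hL hfper (hu.hasDerivAt_of_const hconst 0) (hum 0) (t₀ := 0) ?_
  rw [zero_add]
  exact le_antisymm (not_lt.1 fun h => hgt fun y => hconst 0 y T ▸ h)
    (not_lt.1 fun h => hlt fun y => hconst 0 y T ▸ h)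

-- Comparison transports an ordering only forward in time, so at times before `t₀` the direction
-- of each ordering is dictated by what it would imply at `t₀`.
theorem eq_of_eq_of_ordered (hL : ∀ t, LipschitzOnWith K (f t) (Icc m M))
    (hu : IsSolOn f u univ) (hv : IsSolOn f v univ) (hum : ∀ x t, u x t ∈ Icc m M)
    (hvm : ∀ x t, v x t ∈ Icc m M) {t₀ : ℝ} (hstrict : StrictAnti fun x => u x t₀)
    (hord : ∀ t a, (∀ x, v (x + a) t ≤ u x t) ∨ ∀ x, u x t ≤ v (x + a) t)
    (heq : ∀ x, u x t₀ = v x t₀) (x t : ℝ) : u x t = v x t := by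
  rcases le_total t₀ t with ht | ht
  · exact (le_of_le_of_entire hL hu hv hum hvm (fun x => (heq x).le) x ht).antisymm
      (le_of_le_of_entire hL hv hu hvm hum (fun x => (heq x).ge) x ht)
  have hle_of_pos (a : ℝ) (ha : 0 < a) : v (x + a) t ≤ u x t := by
    refine (hord t a).resolve_right (fun hle => ?_) x
    have := le_of_le_of_entire hL hu (hv.translate_space a) hum (fun x t => hvm _ t) hle 0 ht
    rw [← heq, zero_add] at this
    exact this.not_gt (hstrict ha)
  have hle_of_neg (a : ℝ) (ha : a < 0) : u x t ≤ v (x + a) t := by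
    refine (hord t a).resolve_left (fun hle => ?_) x
    have := le_of_le_of_entire hL (hv.translate_space a) hu (fun x t => hvm _ t) hum hle 0 ht
    rw [← heq, zero_add] at this
    exact this.not_gt (hstrict ha)
  have hcont : Tendsto (fun a => v (x + a) t) (𝓝 0) (𝓝 (v x t)) := by
    have : Continuous fun a => v (x + a) t :=
      hv.continuous.comp (f := fun a => (x + a, t)) (by fun_prop)
    simpa using this.tendsto 0
  exact (ge_of_tendsto (hcont.mono_left (nhdsWithin_le_nhds (s := Iio 0)))
      (eventually_mem_nhdsWithin.mono hle_of_neg)).antisymm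
    (le_of_tendsto (hcont.mono_left (nhdsWithin_le_nhds (s := Ioi 0)))
      (eventually_mem_nhdsWithin.mono hle_of_pos))

theorem exists_eq_translate_of_ordered_period (hL : ∀ t, LipschitzOnWith K (f t) (Icc m M))
    (hfper : ∀ t v, f (t + T) v = f t v) (hu : IsSolOn f u univ)
    (hum : ∀ x t, u x t ∈ Icc m M) (hstrict : StrictAnti fun x => u x 0)
    (hord : ∀ t a, (∀ x, u (x + a) (t + T) ≤ u x t) ∨ ∀ x, u x t ≤ u (x + a) (t + T))
    (hlt : ¬∀ y, u y T < u 0 0) (hgt : ¬∀ y, u 0 0 < u y T) :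
    ∃ a, ∀ x t, u x t = u (x + a) (t + T) := by
  have hcont : Continuous fun x => u x T :=
    hu.continuous.comp (f := fun x => (x, T)) (by fun_prop)
  obtain ⟨a, ha⟩ := exists_eq_translate_of_ordered hstrict hcont
    (fun a => by simpa only [zero_add] using hord 0 a) hlt hgt
  refine ⟨a, eq_of_eq_of_ordered hL hu
    (hu.translate a T (fun _ _ => mem_univ _) fun t v => (hfper t v).symm) hum
    (fun x t => hum _ _) (t₀ := 0) hstrict (fun t b => ?_) fun x => by rw [zero_add, ha]⟩
  simpa only [add_assoc] using hord t (b + a)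

end IsSolOn

theorem exists_isPulsatingFront_of_eq_translate (hf : Continuous (Function.uncurry f))
    (hu : IsSolOn f u univ) (hum : ∀ x t, u x t ∈ Icc m M) (hanti : ∀ t, Antitone fun x => u x t)
    {t₀ : ℝ} (hstrict : StrictAnti fun x => u x t₀) {a : ℝ}
    (ha : ∀ x t, u x t = u (x + a) (t + T)) :
    ∃ (ωa ωb : ℝ → ℝ) (c : ℝ), IsPeriodicSol f T ωa ∧ IsPeriodicSol f T ωb ∧
      (∃ t : ℝ, ωa t ≠ ωb t) ∧ IsPulsatingFront f T ωa ωb u c := by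
  obtain ⟨ωa, hodea, hlima⟩ := hu.exists_limitAtMinusInf hf hum hanti
  obtain ⟨ωb, hodeb, hlimb⟩ := hu.exists_limitAtPlusInf hf hum hanti
  have hpera (t : ℝ) : ωa (t + T) = ωa t := tendsto_nhds_unique
    ((hlima.tendsto (t + T)).comp (tendsto_atBot_add_const_right _ a tendsto_id))
    ((hlima.tendsto t).congr fun x => ha x t)
  have hperb (t : ℝ) : ωb (t + T) = ωb t := tendsto_nhds_unique
    ((hlimb.tendsto (t + T)).comp (tendsto_atTop_add_const_right _ a tendsto_id))
    ((hlimb.tendsto t).congr fun x => ha x t)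
  have hne : ωb t₀ < ωa t₀ :=
    calc ωb t₀ ≤ u 1 t₀ := (hanti t₀).le_of_tendsto (hlimb.tendsto t₀) 1
      _ < u 0 t₀ := hstrict one_pos
      _ ≤ ωa t₀ := (hanti t₀).ge_of_tendsto (hlima.tendsto t₀) 0
  exact ⟨ωa, ωb, -a / T, ⟨hodea, hpera⟩, ⟨hodeb, hperb⟩, ⟨t₀, hne.ne'⟩, hu,
    ⟨-a, rfl, fun x t => by rw [sub_neg_eq_add, ha]⟩, hlima, hlimb⟩

end EntireSolutions

/-! ### Passage to the limit -/

lemma not_eventually_add_le_of_le_linear {s : ℕ → ℝ} {r R C : ℝ} (hr : r < R)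
    (hle : ∀ᶠ j in atTop, s j ≤ r * j + C) : ¬∀ᶠ j in atTop, s j + R ≤ s (j + 1) := by
  intro hstep
  obtain ⟨J, hJ⟩ := eventually_atTop.1 (hle.and hstep)
  have hgrowth (n : ℕ) : s J + n * R ≤ s (J + n) := by
    induction n with
    | zero => simp
    | succ n ih =>
      have := (hJ (J + n) (Nat.le_add_right J n)).2
      push_cast
      rw [← add_assoc]
      linarith
  obtain ⟨n, hn⟩ := Archimedean.arch (r * J + C - s J + 1) (sub_pos.2 hr)
  have hbound := (hJ (J + n) (Nat.le_add_right J n)).1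
  rw [nsmul_eq_mul] at hn
  push_cast at hbound
  linarith [hgrowth n]

lemma log_div_le_of_le_mul_exp {a b z : ℝ} (ha : 0 < a) (hab : a ≤ b * exp z) :
    log (a / b) ≤ z := by
  have hb : 0 < b := pos_of_mul_pos_left (ha.trans_le hab) (exp_pos z).le
  exact (log_le_iff_le_exp (div_pos ha hb)).2 ((div_le_iff₀' hb).2 hab)

lemma eventually_pos_add_natCast_mul {T : ℝ} (hT : 0 < T) (t : ℝ) :
    ∀ᶠ j : ℕ in atTop, 0 < t + j * T :=
  (tendsto_atTop_add_const_left _ t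
    (tendsto_natCast_atTop_atTop.atTop_mul_const hT)).eventually_gt_atTop 0

section Limit

variable {f u W V : ℝ → ℝ → ℝ} {ω : ℝ → ℝ} {ℓ : ℕ → ℝ} {K : NNReal} {M T lam : ℝ}

lemma IsPeriodicSol.continuous (hω : IsPeriodicSol f T ω) : Continuous ω :=
  continuous_iff_continuousAt.2 fun t => (hω.1 t).continuousAt

lemma IsPeriodicSol.exists_forall_le (hω : IsPeriodicSol f T ω) (hT : T ≠ 0) :
    ∃ M, ∀ t, ω t ≤ M := by
  obtain ⟨M, hM⟩ := (Function.Periodic.compact_of_continuous hω.2 hT hω.continuous).bddAbove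
  exact ⟨M, fun t => hM ⟨t, rfl⟩⟩

namespace IsHeavisideSol

lemma level_le_linear (hT : 0 < T) (hf : Continuous (Function.uncurry f)) (hf0 : ∀ t, f t 0 = 0)
    (hL : ∀ t, LipschitzOnWith K (f t) (Icc 0 M)) (hωM : ∀ t, ω t ≤ M)
    (hu : IsHeavisideSol f (ω 0) 0 ω u) (hlam : 0 < lam)
    (hℓ : ∀ j : ℕ, 1 ≤ j → u (ℓ j) (j * T) = lam) {j : ℕ} (hj : 1 ≤ j) :
    ℓ j ≤ (1 + K) * T * j + -log (lam / (M * exp 1)) := by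
  have hjT : 0 < j * T := by positivity
  have hle := hu.le_exp hωM hf hf0 hL (ℓ j) hjT
  rw [hℓ j hj] at hle
  linarith [log_div_le_of_le_mul_exp hlam hle]

lemma neg_level_le_linear (hT : 0 < T) (hf : Continuous (Function.uncurry f))
    (hL : ∀ t, LipschitzOnWith K (f t) (Icc 0 M)) (hω : IsPeriodicSol f T ω) (hωM : ∀ t, ω t ≤ M)
    (hu : IsHeavisideSol f (ω 0) 0 ω u) (hlam : lam < ω 0)
    (hℓ : ∀ j : ℕ, 1 ≤ j → u (ℓ j) (j * T) = lam) {j : ℕ} (hj : 1 ≤ j) :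
    -ℓ j ≤ (1 + K) * T * j + -log ((ω 0 - lam) / (M * exp 1)) := by
  have hjT : 0 < j * T := by positivity
  have hle := hu.sub_le_exp hωM hf hω.1 hL (ℓ j) hjT
  rw [hℓ j hj, Function.Periodic.nat_mul_eq hω.2] at hle
  linarith [log_div_le_of_le_mul_exp (sub_pos.2 hlam) hle]

end IsHeavisideSol

namespace IsULimit

lemma tendsto (hV : IsULimit u ℓ T V) (x t : ℝ) :
    Tendsto (fun j : ℕ => u (x + ℓ j) (t + j * T)) atTop (𝓝 (V x t)) := by
  refine Metric.tendsto_atTop.2 fun ε hε => ?_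
  obtain ⟨J, hJ⟩ := hV {(x, t)} isCompact_singleton ε hε
  exact ⟨J, fun j hj => hJ j hj (x, t) rfl⟩

lemma apply_zero_zero (hV : IsULimit u ℓ T V)
    (hℓ : ∀ j : ℕ, 1 ≤ j → u (ℓ j) (j * T) = lam) : V 0 0 = lam := by
  refine tendsto_nhds_unique (hV.tendsto 0 0) (tendsto_const_nhds.congr' ?_)
  filter_upwards [eventually_ge_atTop 1] with j hj
  rw [zero_add, zero_add, hℓ j hj]

lemma mem_Icc (hT : 0 < T) (hωper : ∀ t, ω (t + T) = ω t)
    (hu : IsHeavisideSol f (ω 0) 0 ω u) (hV : IsULimit u ℓ T V) (x t : ℝ) :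
    V x t ∈ Icc 0 (ω t) := by
  refine isClosed_Icc.mem_of_tendsto (hV.tendsto x t) ?_
  filter_upwards [eventually_pos_add_natCast_mul hT t] with j hj
  have := hu.2.1 (x + ℓ j) _ hj
  rwa [Function.Periodic.nat_mul hωper j t] at this

lemma antitone (hT : 0 < T) (hL : ∀ t, LipschitzOnWith K (f t) (Icc 0 M)) (hω : Continuous ω)
    (hωM : ∀ t, ω t ≤ M) (hu : IsHeavisideSol f (ω 0) 0 ω u) (hV : IsULimit u ℓ T V) (t : ℝ) :
    Antitone fun x => V x t := fun x y hxy => by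
  refine le_of_tendsto_of_tendsto (hV.tendsto y t) (hV.tendsto x t) ?_
  filter_upwards [eventually_pos_add_natCast_mul hT t] with j hj
  exact hu.antitone hω hωM hL hj (add_le_add_left hxy (ℓ j))

theorem crossesFromAbove (hT : 0 < T) (hfper : ∀ t v, f (t + T) v = f t v)
    (hL : ∀ t, LipschitzOnWith K (f t) (Icc 0 M)) (hω : IsPeriodicSol f T ω) (hωM : ∀ t, ω t ≤ M)
    (hu : IsHeavisideSol f (ω 0) 0 ω u) (hV : IsULimit u ℓ T V) (hW : IsSolOn f W univ)
    (hWω : ∀ x t, W x t ∈ Icc 0 (ω t)) (t : ℝ) :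
    CrossesFromAbove (fun x => V x t) fun x => W x t := by
  intro x y hxy hlt
  refine le_of_tendsto (hV.tendsto y t) ?_
  filter_upwards [(hV.tendsto x t).eventually_lt_const hlt, eventually_pos_add_natCast_mul hT t]
    with j hj hpos
  have hfj (t v : ℝ) : f t v = f (t + -(j * T)) v := by
    rw [← sub_eq_add_neg]
    exact (Function.Periodic.sub_nat_mul_eq (f := (f · v)) (fun t => hfper t v) j).symm
  have hωj (t : ℝ) : ω (t + -(j * T)) = ω t := by
    rw [← sub_eq_add_neg, Function.Periodic.sub_nat_mul_eq hω.2]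
  have hcross := hu.crossesFromAbove hω.continuous hωM hL
    (hW.translate (-ℓ j) (-(j * T)) (J := Ioi 0) (fun _ _ => mem_univ _) hfj)
    (fun x t _ => hωj t ▸ hWω _ _) hpos (add_lt_add_left hxy (ℓ j))
  simpa only [add_neg_cancel_right] using hcross (by simpa only [add_neg_cancel_right] using hj)

theorem le_or_le_translate (hT : 0 < T) (hfper : ∀ t v, f (t + T) v = f t v)
    (hL : ∀ t, LipschitzOnWith K (f t) (Icc 0 M)) (hω : IsPeriodicSol f T ω) (hωM : ∀ t, ω t ≤ M)
    (hu : IsHeavisideSol f (ω 0) 0 ω u) (hV : IsULimit u ℓ T V) (hVsol : IsSolOn f V univ)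
    (t a : ℝ) : (∀ x, V (x + a) (t + T) ≤ V x t) ∨ ∀ x, V x t ≤ V (x + a) (t + T) := by
  have hVω := hV.mem_Icc hT hω.2 hu
  have hωT (t : ℝ) : ω (t + -T) = ω t := by rw [← hω.2, neg_add_cancel_right]
  have hfT (t v : ℝ) : f t v = f (t + -T) v := by rw [← hfper (t + -T), neg_add_cancel_right]
  have hforward : CrossesFromAbove (fun x => V x t) fun x => V (x + a) (t + T) :=
    hV.crossesFromAbove hT hfper hL hω hωM hu
      (hVsol.translate a T (fun _ _ => mem_univ _) fun t v => (hfper t v).symm)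
      (fun x t => hω.2 t ▸ hVω _ _) t
  have hbackward : CrossesFromAbove (fun x => V (x + a) (t + T)) fun x => V x t := by
    intro x y hxy hlt
    have hcross := hV.crossesFromAbove hT hfper hL hω hωM hu
      (hVsol.translate (-a) (-T) (fun _ _ => mem_univ _) hfT) (fun x t => hωT t ▸ hVω _ _) (t + T)
      (add_lt_add_left hxy a)
    simpa only [add_neg_cancel_right] using hcross (by simpa only [add_neg_cancel_right] using hlt)
  exact (hforward.le_or_le hbackward).symm

-- A limit lying entirely above the level `lam` at time `T` would make that level of `u` advance,
-- in each period, by more than the exponential supersolution allows.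
theorem not_forall_gt (hT : 0 < T) (hf : Continuous (Function.uncurry f)) (hf0 : ∀ t, f t 0 = 0)
    (hL : ∀ t, LipschitzOnWith K (f t) (Icc 0 M)) (hω : Continuous ω) (hωM : ∀ t, ω t ≤ M)
    (hu : IsHeavisideSol f (ω 0) 0 ω u) (hlam : 0 < lam)
    (hℓ : ∀ j : ℕ, 1 ≤ j → u (ℓ j) (j * T) = lam) (hV : IsULimit u ℓ T V) :
    ¬∀ y, lam < V y T := by
  intro hgt
  refine not_eventually_add_le_of_le_linear (lt_add_one ((1 + K) * T))
    ((eventually_ge_atTop 1).mono fun j => hu.level_le_linear hT hf hf0 hL hωM hlam hℓ) ?_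
  filter_upwards [(hV.tendsto ((1 + K) * T + 1) T).eventually_const_lt (hgt _)] with j hj
  by_contra! hlt
  rw [← hℓ (j + 1) (Nat.le_add_left 1 j), Nat.cast_succ, add_one_mul, add_comm (j * T)] at hj
  exact hj.not_ge (hu.antitone hω hωM hL (by positivity) (by linarith))

theorem not_forall_lt (hT : 0 < T) (hf : Continuous (Function.uncurry f))
    (hL : ∀ t, LipschitzOnWith K (f t) (Icc 0 M)) (hω : IsPeriodicSol f T ω) (hωM : ∀ t, ω t ≤ M)
    (hu : IsHeavisideSol f (ω 0) 0 ω u) (hlam : lam < ω 0)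
    (hℓ : ∀ j : ℕ, 1 ≤ j → u (ℓ j) (j * T) = lam) (hV : IsULimit u ℓ T V) :
    ¬∀ y, V y T < lam := by
  intro hlt
  refine not_eventually_add_le_of_le_linear (s := fun j => -ℓ j) (lt_add_one ((1 + K) * T))
    ((eventually_ge_atTop 1).mono fun j => hu.neg_level_le_linear hT hf hL hω hωM hlam hℓ) ?_
  filter_upwards [(hV.tendsto (-((1 + K) * T + 1)) T).eventually_lt_const (hlt _)] with j hj
  by_contra! hgt
  rw [← hℓ (j + 1) (Nat.le_add_left 1 j), Nat.cast_succ, add_one_mul, add_comm (j * T)] at hj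
  exact hj.not_ge (hu.antitone hω.continuous hωM hL (by positivity) (by linarith))

end IsULimit

end Limit

/-! ### The dichotomy -/

theorem shifted_limit_dichotomy_general {f u₀ V : ℝ → ℝ → ℝ} {T lam : ℝ} {ω : ℝ → ℝ} {ℓ : ℕ → ℝ}
    (hT : 0 < T) (hf : ContDiff ℝ 1 (Function.uncurry f)) (hfper : ∀ t u, f (t + T) u = f t u)
    (hf0 : ∀ t, f t 0 = 0) (hω : IsPeriodicSol f T ω) (hlam : lam ∈ Ioo 0 (ω 0))
    (hu₀ : IsHeavisideSol f (ω 0) 0 ω u₀) (hℓ : ∀ j : ℕ, 1 ≤ j → u₀ (ℓ j) (j * T) = lam)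
    (hV : IsULimit u₀ ℓ T V) (hVsol : IsSolOn f V univ) :
    (∃ ψ : ℝ → ℝ, IsPeriodicSol f T ψ ∧ (∀ t, 0 < ψ t) ∧ ∀ x t, V x t = ψ t) ∨
    ∃ (ωa ωb : ℝ → ℝ) (c : ℝ), IsPeriodicSol f T ωa ∧ IsPeriodicSol f T ωb ∧
      (∃ t, ωa t ≠ ωb t) ∧ IsPulsatingFront f T ωa ωb V c := by
  obtain ⟨M, hωM⟩ := hω.exists_forall_le hT.ne'
  obtain ⟨K, hL⟩ := exists_forall_lipschitzOnWith_of_periodic hT hf hfper 0 M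
  have hVM (x t : ℝ) : V x t ∈ Icc 0 M :=
    Icc_subset_Icc_right (hωM t) (hV.mem_Icc hT hω.2 hu₀ x t)
  have hVanti := hV.antitone hT hL hω.continuous hωM hu₀
  have hV0 : V 0 0 = lam := hV.apply_zero_zero hℓ
  have hlt : ¬∀ y, V y T < V 0 0 := hV0 ▸ hV.not_forall_lt hT hf.continuous hL hω hωM hu₀ hlam.2 hℓ
  have hgt : ¬∀ y, V 0 0 < V y T :=
    hV0 ▸ hV.not_forall_gt hT hf.continuous hf0 hL hω.continuous hωM hu₀ hlam.1 hℓ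
  rcases hVsol.strictAnti_or_const hL hVM hVanti 0 with hstrict | hconst
  · right
    obtain ⟨a, ha⟩ := hVsol.exists_eq_translate_of_ordered_period hL hfper hVM hstrict
      (hV.le_or_le_translate hT hfper hL hω hωM hu₀ hVsol) hlt hgt
    exact exists_isPulsatingFront_of_eq_translate hf.continuous hVsol hVM hVanti hstrict ha
  · left
    have hψ := hVsol.isPeriodicSol_of_const hL hfper hVM hconst hlt hgt
    exact ⟨V 0, hψ, pos_of_pos_of_hasDerivAt hL hf0 hψ.1 (hVM 0) (hV0 ▸ hlam.1),
      fun x t => hconst x 0 t⟩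

/-- **Lemma 3.5.** Under (H1), the entire solution `u_∞(·,·;λ)` is either a positive
`T`-periodic solution of the ODE (i.e. independent of `x`) or a pulsating traveling front
connecting two distinct `T`-periodic solutions. -/
theorem shifted_limit_dichotomy
    (f : ℝ → ℝ → ℝ) (T α : ℝ) (ωsol : ℝ → ℝ → ℝ)
    (hT : 0 < T)
    (hf : ContDiff ℝ 2 (Function.uncurry f))
    (hfper : ∀ t u : ℝ, f (t + T) u = f t u)
    (hf0 : ∀ t : ℝ, f t 0 = 0)
    (hωinit : ∀ β : ℝ, ωsol β 0 = β)
    (hωode : ∀ β t : ℝ, HasDerivAt (ωsol β) (f t (ωsol β t)) t)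
    (hα : 0 < α) (hαfix : ωsol α T = α)
    (hαper : ∀ t : ℝ, ωsol α (t + T) = ωsol α t)
    (hαpos : ∀ t : ℝ, 0 < ωsol α t)
    (hH1 : HypH1 f α (ωsol α))
    (lam : ℝ) (hlam : lam ∈ Set.Ioo 0 α)
    (u₀ : ℝ → ℝ → ℝ) (hu₀ : IsHeavisideSol f α 0 (ωsol α) u₀)
    (ℓ : ℕ → ℝ) (hℓ : ∀ j : ℕ, 1 ≤ j → u₀ (ℓ j) ((j : ℝ) * T) = lam)
    (V : ℝ → ℝ → ℝ) (hV : IsULimit u₀ ℓ T V) (hVsol : IsSolOn f V Set.univ) :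
    (∃ ψ : ℝ → ℝ, IsPeriodicSol f T ψ ∧ (∀ t : ℝ, 0 < ψ t) ∧ ∀ x t : ℝ, V x t = ψ t) ∨
    (∃ (ωa ωb : ℝ → ℝ) (c : ℝ), IsPeriodicSol f T ωa ∧ IsPeriodicSol f T ωb ∧
      (∃ t : ℝ, ωa t ≠ ωb t) ∧ IsPulsatingFront f T ωa ωb V c) :=
  shifted_limit_dichotomy_general hT (hf.of_le one_le_two) hfper hf0 ⟨hωode α, hαper⟩
    (by rwa [hωinit]) (by rwa [hωinit]) hℓ hV hVsol

end
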